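/- arXiv:1610.07740 — 5 statements merged into one kernel-verified Lean document; each statement's English description precedes it below -/
import Mathlib

section
/- Under the stated hypotheses, for every time-splitting factor α ∈ (0,1/2) ∪ (1/2,1), the difference R_coop(P) − R_dist(P) tends to 0 as the power level P tends to infinity. -/
/-!
Both regimes compare sets of achievable sum-rates. A distributed scheme is a cooperative one with
`Q_R = β_R P I`, so `Rdist ≤ Rcoop`, and only an upper bound on the difference is needed.

For `α < 1/2` the uplink is the bottleneck. Each downlink constraint grows like
`|S| (1-α)/2 log P`, which dominates the uplink growth `|S| α/2 log P`; for large `P` the uplink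
bounds are therefore achievable as they stand and `Rcoop = Rdist`
(`eventually_uplink_mem_distSet`).

For `α > 1/2` the downlink is the bottleneck. Let `A_k` be the Gram matrix of
`g_{1,k}, …, g_{N,k}` and `t = β_R P / σ²`. Summing the cooperative downlink constraints over `k`
and applying AM–GM to the eigenvalues of `A_k⁻¹ + Q_R / σ²` bounds the cooperative sum-rate by
`(1-α)/(2(K-1)) ∑ k, log (det A_k (t + c_k)^N)` (`exists_det_upper`, `coopSet_le_downlink`).
Conversely, factor `A_k = L D Lᵀ` with `L` lower triangular and put `δ_{k,n} = L_{nn}² D_n`, so that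
`∏ n, δ_{k,n} = det A_k`. Discarding the positive semidefinite contribution of the columns outside
`S` gives `∏ n ∈ S, t δ_{k,n} ≤ det (I + t ∑ n ∈ S, g_{n,k} g_{n,k}ᵀ)` for every `S`
(`exists_stream_gains`). Hence `x_{k,n} = (1-α)/2 log (t δ_{k,n})` lies in every downlink region, and
the solution `r` of `∑ k' ≠ k, r_{k',n} = x_{k,n}` has growth `(1-α)/(2(K-1)) log P`, below the uplink
growth `α/(2(K-1)) log P`. Its sum-rate is `(1-α)/(2(K-1)) ∑ k, log (det A_k t^N)`
(`eventually_downlink_mem_distSet`), and the gap to the upper bound is a sum of terms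
`log (1 + c_k / t) → 0`.
-/


open Matrix Filter

/-- The downlink channel matrix `G_k ∈ ℝ^{M×N}` whose columns are the vectors
`g_{1,k}, …, g_{N,k}`. -/
def Gmat {K N M : ℕ} (g : Fin N → Fin K → Fin M → ℝ) (k : Fin K) :
    Matrix (Fin M) (Fin N) ℝ :=
  Matrix.of fun i n => g n k i

/-- `R_dist(P)`: the optimal sum-rate of the proposed lattice-coding scheme with
distributed relays, i.e. the supremum of `Σ_k Σ_n R_{k,n}` subject to the uplink
per-stream constraints (i), the downlink MAC constraints (ii), and the user power
constraints (iii).  User indices are `Fin K`, with `k.val = 0` corresponding to user 1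
and `k.val = K−1` to user `K`. -/
noncomputable def Rdist {K N M : ℕ} (R : Fin K → Matrix (Fin N) (Fin N) ℝ)
    (g : Fin N → Fin K → Fin M → ℝ) (β : Fin K → ℝ) (βR σ2 α P : ℝ) : ℝ :=
  sSup {s : ℝ | ∃ r p : Fin K → Fin N → ℝ,
    (∀ k n, 0 < p k n) ∧
    (∀ k n, r k n ≤ (1 / ((K : ℝ) - 1)) *
        max 0 ((α / 2) * Real.logb 2 ((R k n n) ^ 2 * p k n / σ2))) ∧
    (∀ k : Fin K, ∀ S : Finset (Fin N),
      ∑ n ∈ S, ∑ k' ∈ Finset.univ.erase k, r k' n ≤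
        ((1 - α) / 2) * Real.logb 2
          (1 + (βR * P / σ2) • ∑ n ∈ S, Matrix.vecMulVec (g n k) (g n k)).det) ∧
    (∀ k : Fin K, (k.val = 0 ∨ k.val = K - 1) →
      (1 / ((K : ℝ) - 1)) * ∑ n, p k n ≤ β k * P) ∧
    (∀ k : Fin K, ¬(k.val = 0 ∨ k.val = K - 1) →
      (2 / ((K : ℝ) - 1)) * ∑ n, p k n ≤ β k * P) ∧
    s = ∑ k, ∑ n, r k n}

/-- `R_coop(P)`: the optimal sum-rate of the corresponding scheme with cooperative
relays, where the relays form a super node with covariance `Q_R` (symmetric PSD,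
`trace Q_R ≤ N·β_R·P`). -/
noncomputable def Rcoop {K N M : ℕ} (R : Fin K → Matrix (Fin N) (Fin N) ℝ)
    (g : Fin N → Fin K → Fin M → ℝ) (β : Fin K → ℝ) (βR σ2 α P : ℝ) : ℝ :=
  sSup {s : ℝ | ∃ (r : Fin K → ℝ) (p : Fin K → Fin N → ℝ)
      (QR : Matrix (Fin N) (Fin N) ℝ),
    QR.PosSemidef ∧ QR.trace ≤ (N : ℝ) * βR * P ∧
    (∀ k n, 0 < p k n) ∧
    (∀ k, r k ≤ (1 / ((K : ℝ) - 1)) *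
        ∑ n, max 0 ((α / 2) * Real.logb 2 ((R k n n) ^ 2 * p k n / σ2))) ∧
    (∀ k : Fin K, ∑ k' ∈ Finset.univ.erase k, r k' ≤
        ((1 - α) / 2) * Real.logb 2
          (1 + σ2⁻¹ • (Gmat g k * QR * (Gmat g k)ᵀ)).det) ∧
    (∀ k : Fin K, (k.val = 0 ∨ k.val = K - 1) →
      (1 / ((K : ℝ) - 1)) * ∑ n, p k n ≤ β k * P) ∧
    (∀ k : Fin K, ¬(k.val = 0 ∨ k.val = K - 1) →
      (2 / ((K : ℝ) - 1)) * ∑ n, p k n ≤ β k * P) ∧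
    s = ∑ k, r k}

/-! ### Determinant inequalities -/

/-- `det (1 + Z) = ∏ (1 + λᵢ) ≥ 1` for a positive semidefinite `Z`. -/
lemma one_le_det_one_add {n : Type*} [Fintype n] [DecidableEq n] {Z : Matrix n n ℝ}
    (hZ : Z.PosSemidef) : 1 ≤ (1 + Z).det := by
  have h1 : Z.charpoly.eval (-1) = (-(1 + Z)).det := by
    rw [Matrix.eval_charpoly]; congr 1; ext i j; simp [Matrix.one_apply, Matrix.diagonal]; split_ifs <;> ring
  rw [hZ.1.charpoly_eq, Polynomial.eval_prod, Matrix.det_neg] at h1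
  have h2 : ∀ i, Polynomial.eval (-1) (Polynomial.X - Polynomial.C (RCLike.ofReal (K := ℝ) (hZ.1.eigenvalues i)))
      = -1 * (1 + hZ.1.eigenvalues i) := by intro i; simp; ring
  simp only [h2, Finset.prod_mul_distrib, Finset.prod_const, Finset.card_univ] at h1
  have h3 := mul_left_cancel₀ (pow_ne_zero _ (by norm_num)) h1
  rw [← h3]
  exact Finset.one_le_prod fun i _ => by linarith [hZ.eigenvalues_nonneg i]

open scoped MatrixOrder Matrix.Norms.L2Operator in
/-- The determinant is monotone for the Loewner order: with `Y = CᴴC`,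
`det (X + Y) = det X * det (1 + C X⁻¹ Cᴴ)`. -/
lemma det_le_det_add {n : Type*} [Fintype n] [DecidableEq n] {X Y : Matrix n n ℝ}
    (hX : X.PosDef) (hY : Y.PosSemidef) : X.det ≤ (X + Y).det := by
  obtain ⟨C, rfl⟩ := CStarAlgebra.nonneg_iff_eq_star_mul_self.1 hY.nonneg
  rw [Matrix.star_eq_conjTranspose]
  have hu : IsUnit X.det := (Matrix.isUnit_iff_isUnit_det _).1 hX.isUnit
  have h : X + Cᴴ * C = X * (1 + (X⁻¹ * Cᴴ) * C) := by
    rw [Matrix.mul_add, Matrix.mul_one, ← Matrix.mul_assoc, ← Matrix.mul_assoc,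
      Matrix.mul_nonsing_inv _ hu, Matrix.one_mul]
  rw [h, Matrix.det_mul, Matrix.det_one_add_mul_comm]
  refine le_mul_of_one_le_right hX.det_pos.le (one_le_det_one_add ?_)
  rw [← Matrix.mul_assoc]
  exact hX.inv.posSemidef.mul_mul_conjTranspose_same C

/-- AM–GM for the eigenvalues of a positive semidefinite matrix. -/
lemma det_le_trace_div_pow {N : ℕ} (hN : 1 ≤ N) {X : Matrix (Fin N) (Fin N) ℝ}
    (hX : X.PosSemidef) : X.det ≤ (X.trace / N) ^ N := by
  have hN' : (N : ℝ) ≠ 0 := by positivity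
  have h := Real.geom_mean_le_arith_mean Finset.univ (fun _ => (1 : ℝ)) hX.1.eigenvalues
    (fun _ _ => zero_le_one) (by simp; omega) (fun i _ => hX.eigenvalues_nonneg i)
  have hp : 0 ≤ ∏ i, hX.1.eigenvalues i := Finset.prod_nonneg fun i _ => hX.eigenvalues_nonneg i
  simp only [Real.rpow_one, one_mul, Finset.sum_const, Finset.card_univ, Fintype.card_fin,
    nsmul_eq_mul, mul_one] at h
  have h2 := pow_le_pow_left₀ (Real.rpow_nonneg hp _) h N
  rw [Real.rpow_inv_natCast_pow hp (by omega)] at h2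
  rw [hX.1.det_eq_prod_eigenvalues, hX.1.trace_eq_sum_eigenvalues]
  simpa using h2

/-- The LDL decomposition of a real positive definite matrix, with the triangularity of `L`. -/
lemma exists_ldl {N : ℕ} {A : Matrix (Fin N) (Fin N) ℝ} (hA : A.PosDef) :
    ∃ (L : Matrix (Fin N) (Fin N) ℝ) (d : Fin N → ℝ), L.IsLowerTriangular ∧ (∀ n, 0 ≤ d n) ∧
      A = L * diagonal d * Lᵀ := by
  refine ⟨LDL.lower hA, LDL.diagEntries hA, ?_, fun n => ?_, ?_⟩
  · exact Matrix.blockTriangular_inv_of_blockTriangular (M := LDL.lowerInv hA) fun i j hij =>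
      LDL.lowerInv_triangular hA hij
  · have h := (hA.posSemidef.mul_mul_conjTranspose_same (LDL.lowerInv hA))
    rw [← LDL.diag_eq_lowerInv_conj, LDL.diag] at h
    exact (Matrix.posSemidef_diagonal_iff.1 h) n
  · simpa [LDL.diag] using (LDL.lower_conj_diag hA).symm

lemma mul_diagonal_mul_transpose_apply {N : ℕ} (X : Matrix (Fin N) (Fin N) ℝ) (d : Fin N → ℝ)
    (i j : Fin N) : (X * diagonal d * Xᵀ) i j = ∑ k, X i k * d k * X j k := by
  simp [Matrix.mul_apply (M := X * diagonal d), Matrix.mul_diagonal]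

/-- For vectors with Gram matrix `A = L D Lᵀ`, the numbers `δ n = L n n ^ 2 * D n` multiply to
`det A` and bound the determinants of all sub-collections from below. -/
lemma exists_stream_gains {N M : ℕ} (g : Fin N → Fin M → ℝ) (hg : LinearIndependent ℝ g) :
    ((Matrix.of g) * (Matrix.of g)ᵀ).PosDef ∧
    ∃ δ : Fin N → ℝ, (∀ n, 0 < δ n) ∧ ∏ n, δ n = ((Matrix.of g) * (Matrix.of g)ᵀ).det ∧
      ∀ t : ℝ, 0 < t → ∀ S : Finset (Fin N),
        ∏ n ∈ S, (t * δ n) ≤ (1 + t • ∑ n ∈ S, Matrix.vecMulVec (g n) (g n)).det := by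
  have hA : ((Matrix.of g) * (Matrix.of g)ᵀ).PosDef := by
    have := Matrix.PosDef.mul_conjTranspose_self (Matrix.of g)
      (Matrix.vecMul_injective_iff.2 hg)
    simpa using this
  refine ⟨hA, ?_⟩
  obtain ⟨L, d, hL, hd, hLD⟩ := exists_ldl hA
  have hdet : ∏ n, L n n ^ 2 * d n = ((Matrix.of g) * (Matrix.of g)ᵀ).det := by
    rw [hLD, Matrix.det_mul, Matrix.det_mul, Matrix.det_transpose, Matrix.det_diagonal,
      Matrix.det_of_isLowerTriangular L hL, ← Finset.prod_mul_distrib, ← Finset.prod_mul_distrib]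
    exact Finset.prod_congr rfl fun n _ => by ring
  have hne : ∀ n, L n n ^ 2 * d n ≠ 0 := fun n =>
    Finset.prod_ne_zero_iff.1 (hdet ▸ hA.det_pos.ne') n (Finset.mem_univ n)
  have hd0 : ∀ n, 0 < d n := fun n => lt_of_le_of_ne (hd n) (right_ne_zero_of_mul (hne n)).symm
  have hL0 : ∀ n, L n n ≠ 0 := fun n h => hne n (by simp [h])
  refine ⟨fun n => L n n ^ 2 * d n, fun n => by have := hL0 n; have := hd0 n; positivity, hdet,
    fun t ht S => ?_⟩
  set E : Matrix (Fin N) (Fin N) ℝ := diagonal fun n => if n ∈ S then 1 else 0 with hE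
  have hGE : t • ∑ n ∈ S, Matrix.vecMulVec (g n) (g n) =
      (t • ((Matrix.of g)ᵀ * E)) * (E * Matrix.of g) := by
    ext i j
    rw [Matrix.smul_mul, Matrix.smul_apply, Matrix.smul_apply, Matrix.sum_apply,
      ← Matrix.mul_assoc, Matrix.mul_assoc _ E E, hE, Matrix.diagonal_mul_diagonal,
      Matrix.mul_apply]
    simp only [Matrix.mul_diagonal, Matrix.transpose_apply, Matrix.of_apply,
      Matrix.vecMulVec_apply]
    congr 1
    rw [← Finset.sum_filter_add_sum_filter_not Finset.univ (· ∈ S),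
      Finset.sum_eq_zero (s := Finset.univ.filter (¬ · ∈ S)) (by simp +contextual), add_zero,
      Finset.filter_mem_eq_inter, Finset.univ_inter]
    exact Finset.sum_congr rfl fun n hn => by simp [hn]
  -- restriction of `L` to the rows and columns in `S`, completed by the identity
  set W : Matrix (Fin N) (Fin N) ℝ := Matrix.of fun i k =>
    if i ∈ S then (if k ∈ S then L i k else 0) else (if i = k then 1 else 0) with hW
  -- the part of `L` in the rows of `S` and the columns outside `S`
  set V : Matrix (Fin N) (Fin N) ℝ := Matrix.of fun i k =>
    if i ∈ S then (if k ∈ S then 0 else L i k) else 0 with hV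
  set F : Fin N → ℝ := fun n => if n ∈ S then t * d n else 1 with hF
  have hsplit : 1 + (E * Matrix.of g) * (t • ((Matrix.of g)ᵀ * E)) =
      W * diagonal F * Wᵀ + (E + V * diagonal (fun n => t * d n) * Vᵀ) := by
    have : (E * Matrix.of g) * (t • ((Matrix.of g)ᵀ * E)) =
        t • (E * (L * diagonal d * Lᵀ) * E) := by
      rw [← hLD]; simp [Matrix.mul_assoc]
    rw [this]
    ext i j
    rw [Matrix.add_apply, Matrix.add_apply, Matrix.add_apply, Matrix.smul_apply, hE,
      Matrix.mul_diagonal, Matrix.diagonal_mul, mul_diagonal_mul_transpose_apply,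
      mul_diagonal_mul_transpose_apply, mul_diagonal_mul_transpose_apply]
    simp only [hW, hV, hF, Matrix.of_apply, Matrix.one_apply, Matrix.diagonal_apply]
    by_cases hi : i ∈ S <;> by_cases hj : j ∈ S
    · simp only [hi, hj, if_true, smul_eq_mul, one_mul, mul_one]
      rw [add_left_comm, ← Finset.sum_add_distrib, Finset.mul_sum]
      congr 1
      refine Finset.sum_congr rfl fun k _ => ?_
      split_ifs <;> ring
    · have : i ≠ j := fun h => hj (h ▸ hi)
      simp [hi, hj, this]
    · have : i ≠ j := fun h => hi (h ▸ hj)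
      simp only [hi, hj, this]
      simp
      refine (Finset.sum_eq_zero fun k hk => ?_).symm
      have : i ≠ k := fun h => hi (h ▸ hk)
      simp [this]
    · simp [hi, hj]
  have hWdet : W.det = ∏ n ∈ S, L n n := by
    rw [Matrix.det_of_isLowerTriangular W, hW]
    · rw [← Finset.prod_filter_mul_prod_filter_not Finset.univ (· ∈ S),
        Finset.prod_eq_one (s := Finset.univ.filter (¬ · ∈ S)) (by simp +contextual), mul_one,
        Finset.filter_mem_eq_inter, Finset.univ_inter]
      exact Finset.prod_congr rfl fun n hn => by simp [hn]
    · intro i j hij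
      have h1 := hL hij
      have h2 : i ≠ j := fun h => by simp [h] at hij
      simp [hW, h1, h2]
  have hXdet : (W * diagonal F * Wᵀ).det = ∏ n ∈ S, (t * (L n n ^ 2 * d n)) := by
    rw [Matrix.det_mul, Matrix.det_mul, Matrix.det_transpose, Matrix.det_diagonal, hWdet]
    have : ∏ n, F n = ∏ n ∈ S, t * d n := by simp [hF, Finset.prod_ite_mem]
    rw [this, ← Finset.prod_mul_distrib, ← Finset.prod_mul_distrib]
    exact Finset.prod_congr rfl fun n _ => by ring
  have hXpos : (W * diagonal F * Wᵀ).PosDef := by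
    have h1 : (diagonal F).PosDef := Matrix.PosDef.diagonal fun n => by
      simp only [hF]; split_ifs
      · exact mul_pos ht (hd0 n)
      · exact one_pos
    have h2 : IsUnit W := (Matrix.isUnit_iff_isUnit_det _).2 (by
      rw [hWdet]; exact (Finset.prod_ne_zero_iff.2 fun n _ => hL0 n).isUnit)
    simpa using h1.mul_mul_conjTranspose_same (Matrix.vecMul_injective_iff_isUnit.2 h2)
  have hYpos : (E + V * diagonal (fun n => t * d n) * Vᵀ).PosSemidef := by
    refine Matrix.PosSemidef.add (Matrix.PosSemidef.diagonal fun n => ?_) ?_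
    · simp only [Pi.zero_apply]; split_ifs <;> simp
    · simpa using (Matrix.PosSemidef.diagonal (d := fun n => t * d n)
        (fun n => (mul_pos ht (hd0 n)).le)).mul_mul_conjTranspose_same V
  rw [hGE, Matrix.det_one_add_mul_comm, hsplit, ← hXdet]
  exact det_le_det_add hXpos hYpos

/-- White covariance is asymptotically optimal: with `A = GᵀG`, one has
`det (1 + s G Q Gᵀ) = det A * det (A⁻¹ + s Q)`, and AM–GM bounds the last factor by the trace. Here
`c = tr A⁻¹ / N`. -/
lemma exists_det_upper {N M : ℕ} (hN : 1 ≤ N) (G : Matrix (Fin M) (Fin N) ℝ)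
    (hA : (Gᵀ * G).PosDef) :
    ∃ c : ℝ, 0 < c ∧ ∀ (Q : Matrix (Fin N) (Fin N) ℝ) (s τ : ℝ), 0 < s → Q.PosSemidef →
      Q.trace ≤ N * τ →
      0 < (1 + s • (G * Q * Gᵀ)).det ∧
      (1 + s • (G * Q * Gᵀ)).det ≤ (Gᵀ * G).det * (s * τ + c) ^ N := by
  have hN' : (0 : ℝ) < N := by exact_mod_cast hN
  have : Nonempty (Fin N) := ⟨⟨0, hN⟩⟩
  refine ⟨(Gᵀ * G)⁻¹.trace / N, div_pos hA.inv.trace_pos hN', fun Q s τ hs hQ htr => ⟨?_, ?_⟩⟩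
  · refine lt_of_lt_of_le one_pos (one_le_det_one_add (Matrix.PosSemidef.smul ?_ hs.le))
    simpa using hQ.mul_mul_conjTranspose_same G
  · have hu : IsUnit (Gᵀ * G).det := (Matrix.isUnit_iff_isUnit_det _).1 hA.isUnit
    have h1 : (1 + s • (G * Q * Gᵀ)).det = (Gᵀ * G).det * ((Gᵀ * G)⁻¹ + s • Q).det := by
      rw [← Matrix.det_mul, Matrix.mul_add, Matrix.mul_nonsing_inv _ hu]
      have : s • (G * Q * Gᵀ) = G * (s • (Q * Gᵀ)) := by simp [Matrix.mul_assoc]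
      rw [this, Matrix.det_one_add_mul_comm, ← Matrix.det_transpose]
      have hQt : Qᵀ = Q := by simpa using hQ.1.eq
      simp [Matrix.transpose_mul, hQt, Matrix.mul_assoc]
    have hps : ((Gᵀ * G)⁻¹ + s • Q).PosSemidef := hA.inv.posSemidef.add (hQ.smul hs.le)
    rw [h1]
    refine mul_le_mul_of_nonneg_left ((det_le_trace_div_pow hN hps).trans ?_) hA.det_pos.le
    refine pow_le_pow_left₀ (div_nonneg hps.trace_nonneg hN'.le) ?_ N
    rw [Matrix.trace_add, Matrix.trace_smul, add_div, smul_eq_mul, add_comm]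
    have : s * Q.trace / N ≤ s * τ := by
      rw [div_le_iff₀ hN', mul_assoc, mul_comm τ]
      exact mul_le_mul_of_nonneg_left htr hs.le
    linarith

/-! ### The rate regions -/

/-- The user power constraints, together with positivity of the powers. -/
def PowerFeasible {K N : ℕ} (β : Fin K → ℝ) (P : ℝ) (p : Fin K → Fin N → ℝ) : Prop :=
  (∀ k n, 0 < p k n) ∧
  (∀ k : Fin K, (k.val = 0 ∨ k.val = K - 1) → (1 / ((K : ℝ) - 1)) * ∑ n, p k n ≤ β k * P) ∧
  (∀ k : Fin K, ¬(k.val = 0 ∨ k.val = K - 1) → (2 / ((K : ℝ) - 1)) * ∑ n, p k n ≤ β k * P)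

/-- The uplink bound on the rate of stream `n` of user `k` under the power allocation `p`. -/
noncomputable def uplinkCap {K N : ℕ} (R : Fin K → Matrix (Fin N) (Fin N) ℝ) (σ2 α : ℝ)
    (p : Fin K → Fin N → ℝ) (k : Fin K) (n : Fin N) : ℝ :=
  (1 / ((K : ℝ) - 1)) * max 0 ((α / 2) * Real.logb 2 ((R k n n) ^ 2 * p k n / σ2))

/-- The sum-rates achievable with distributed relays; `Rdist` is the supremum of this set. -/
def distSet {K N M : ℕ} (R : Fin K → Matrix (Fin N) (Fin N) ℝ)
    (g : Fin N → Fin K → Fin M → ℝ) (β : Fin K → ℝ) (βR σ2 α P : ℝ) : Set ℝ :=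
  {s | ∃ r p : Fin K → Fin N → ℝ, PowerFeasible β P p ∧
    (∀ k n, r k n ≤ uplinkCap R σ2 α p k n) ∧
    (∀ k : Fin K, ∀ S : Finset (Fin N),
      ∑ n ∈ S, ∑ k' ∈ Finset.univ.erase k, r k' n ≤
        ((1 - α) / 2) * Real.logb 2
          (1 + (βR * P / σ2) • ∑ n ∈ S, Matrix.vecMulVec (g n k) (g n k)).det) ∧
    s = ∑ k, ∑ n, r k n}

/-- The sum-rates achievable with cooperative relays; `Rcoop` is the supremum of this set. -/
def coopSet {K N M : ℕ} (R : Fin K → Matrix (Fin N) (Fin N) ℝ)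
    (g : Fin N → Fin K → Fin M → ℝ) (β : Fin K → ℝ) (βR σ2 α P : ℝ) : Set ℝ :=
  {s | ∃ (r : Fin K → ℝ) (p : Fin K → Fin N → ℝ) (QR : Matrix (Fin N) (Fin N) ℝ),
    PowerFeasible β P p ∧ QR.PosSemidef ∧ QR.trace ≤ (N : ℝ) * βR * P ∧
    (∀ k, r k ≤ ∑ n, uplinkCap R σ2 α p k n) ∧
    (∀ k : Fin K, ∑ k' ∈ Finset.univ.erase k, r k' ≤
        ((1 - α) / 2) * Real.logb 2
          (1 + σ2⁻¹ • (Gmat g k * QR * (Gmat g k)ᵀ)).det) ∧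
    s = ∑ k, r k}

lemma Rdist_eq_sSup {K N M : ℕ} (R : Fin K → Matrix (Fin N) (Fin N) ℝ)
    (g : Fin N → Fin K → Fin M → ℝ) (β : Fin K → ℝ) (βR σ2 α P : ℝ) :
    Rdist R g β βR σ2 α P = sSup (distSet R g β βR σ2 α P) := by
  unfold Rdist distSet PowerFeasible uplinkCap
  congr 1; ext s
  constructor
  · rintro ⟨r, p, h1, h2, h3, h4, h5, h6⟩
    exact ⟨r, p, ⟨h1, h4, h5⟩, h2, h3, h6⟩
  · rintro ⟨r, p, ⟨h1, h4, h5⟩, h2, h3, h6⟩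
    exact ⟨r, p, h1, h2, h3, h4, h5, h6⟩

lemma Rcoop_eq_sSup {K N M : ℕ} (R : Fin K → Matrix (Fin N) (Fin N) ℝ)
    (g : Fin N → Fin K → Fin M → ℝ) (β : Fin K → ℝ) (βR σ2 α P : ℝ) :
    Rcoop R g β βR σ2 α P = sSup (coopSet R g β βR σ2 α P) := by
  unfold Rcoop coopSet PowerFeasible uplinkCap
  simp only [← Finset.mul_sum]
  congr 1; ext s
  constructor
  · rintro ⟨r, p, Q, hQ, ht, h1, h2, h3, h4, h5, h6⟩
    exact ⟨r, p, Q, ⟨h1, h4, h5⟩, hQ, ht, h2, h3, h6⟩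
  · rintro ⟨r, p, Q, ⟨h1, h4, h5⟩, hQ, ht, h2, h3, h6⟩
    exact ⟨r, p, Q, hQ, ht, h1, h2, h3, h4, h5, h6⟩

/-- A distributed scheme is a cooperative one whose relays use the white covariance
`Q_R = β_R P I`; the full-set downlink constraint becomes the cooperative one. -/
lemma distSet_subset_coopSet {K N M : ℕ} (R : Fin K → Matrix (Fin N) (Fin N) ℝ)
    (g : Fin N → Fin K → Fin M → ℝ) (β : Fin K → ℝ) (βR σ2 α P : ℝ) (hP : 0 < βR * P) :
    distSet R g β βR σ2 α P ⊆ coopSet R g β βR σ2 α P := by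
  rintro s ⟨r, p, hp, hup, hdown, rfl⟩
  refine ⟨fun k => ∑ n, r k n, p, (βR * P) • 1, hp, Matrix.PosSemidef.one.smul hP.le, ?_,
    fun k => Finset.sum_le_sum fun n _ => hup k n, fun k => ?_, rfl⟩
  · rw [Matrix.trace_smul, Matrix.trace_one, smul_eq_mul, Fintype.card_fin]
    exact le_of_eq (by ring)
  · have h := hdown k Finset.univ
    rw [Finset.sum_comm] at h
    have heq : (βR * P / σ2) • ∑ n, Matrix.vecMulVec (g n k) (g n k) =
        σ2⁻¹ • (Gmat g k * ((βR * P) • (1 : Matrix (Fin N) (Fin N) ℝ)) * (Gmat g k)ᵀ) := by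
      rw [Matrix.mul_smul, Matrix.mul_one, Matrix.smul_mul, smul_smul, inv_mul_eq_div]
      congr 1
      ext i j
      simp [Matrix.sum_apply, Matrix.mul_apply, Gmat, Matrix.vecMulVec_apply]
    rwa [heq] at h

lemma one_le_natCast_sub_one {K : ℕ} (hK : 2 ≤ K) : (1 : ℝ) ≤ (K : ℝ) - 1 := by
  have : (2 : ℝ) ≤ K := by exact_mod_cast hK
  linarith

lemma PowerFeasible.le {K N : ℕ} (hK : 2 ≤ K) {β : Fin K → ℝ} {P : ℝ}
    {p : Fin K → Fin N → ℝ} (hp : PowerFeasible β P p) (k : Fin K) (n : Fin N) :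
    p k n ≤ ((K : ℝ) - 1) * β k * P := by
  obtain ⟨hpos, h1, h2⟩ := hp
  have hκ := one_le_natCast_sub_one hK
  have hκ0 : (0 : ℝ) < (K : ℝ) - 1 := by linarith
  have hs : p k n ≤ ∑ m, p k m :=
    Finset.single_le_sum (f := p k) (fun m _ => (hpos k m).le) (Finset.mem_univ n)
  have hn := hpos k n
  have h3 : (1 / ((K : ℝ) - 1)) * ∑ m, p k m ≤ β k * P := by
    by_cases h : k.val = 0 ∨ k.val = K - 1
    · exact h1 k h
    · refine le_trans (mul_le_mul_of_nonneg_right ?_ (by linarith)) (h2 k h)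
      gcongr; norm_num
  rw [one_div, inv_mul_le_iff₀ hκ0] at h3
  linarith

/-- Equal power on all streams, at half the budget of the end users so that both kinds of
power constraint hold. -/
lemma powerFeasible_equal {K N : ℕ} (hK : 2 ≤ K) (hN : 1 ≤ N) {β : Fin K → ℝ}
    (hβ : ∀ k, 0 < β k) {P : ℝ} (hP : 0 < P) :
    PowerFeasible β P (fun k (_ : Fin N) => ((K : ℝ) - 1) * β k / (2 * N) * P) := by
  have hκ0 : (0 : ℝ) < (K : ℝ) - 1 := by linarith [one_le_natCast_sub_one hK]
  have hN0 : (0 : ℝ) < N := by exact_mod_cast hN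
  refine ⟨fun k n => by have := hβ k; positivity, fun k _ => ?_, fun k _ => ?_⟩
  · have := mul_pos (hβ k) hP
    have h : (1 / ((K : ℝ) - 1)) * ∑ _n : Fin N, ((K : ℝ) - 1) * β k / (2 * N) * P
        = β k * P / 2 := by
      simp only [Finset.sum_const, Finset.card_univ, Fintype.card_fin, nsmul_eq_mul]
      field_simp
    linarith
  · have h : (2 / ((K : ℝ) - 1)) * ∑ _n : Fin N, ((K : ℝ) - 1) * β k / (2 * N) * P
        = β k * P := by
      simp only [Finset.sum_const, Finset.card_univ, Fintype.card_fin, nsmul_eq_mul]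
      field_simp
    exact h.le

lemma uplinkCap_le {K N : ℕ} (hK : 2 ≤ K) {R : Fin K → Matrix (Fin N) (Fin N) ℝ}
    (hR : ∀ k n, R k n n ≠ 0) {β : Fin K → ℝ} (hβ : ∀ k, 0 < β k) {σ2 α P : ℝ} (hσ : 0 < σ2)
    (hα : 0 < α) (hP : 0 < P) {p : Fin K → Fin N → ℝ} (hp : PowerFeasible β P p)
    (k : Fin K) (n : Fin N) :
    uplinkCap R σ2 α p k n ≤ (1 / ((K : ℝ) - 1)) * max 0 ((α / 2) *
      (Real.logb 2 P + Real.logb 2 ((R k n n) ^ 2 * (((K : ℝ) - 1) * β k) / σ2))) := by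
  have hκ0 : (0 : ℝ) < (K : ℝ) - 1 := by linarith [one_le_natCast_sub_one hK]
  have hR2 : 0 < (R k n n) ^ 2 := by have := hR k n; positivity
  have hβk := hβ k
  have hpk := hp.1 k n
  rw [← Real.logb_mul hP.ne' (by positivity)]
  unfold uplinkCap
  gcongr
  · norm_num
  · rw [mul_div_assoc', div_le_div_iff_of_pos_right hσ]
    calc R k n n ^ 2 * p k n ≤ R k n n ^ 2 * (((K : ℝ) - 1) * β k * P) := by
          gcongr; exact hp.le hK k n
      _ = _ := by ring

lemma coopSet_bddAbove {K N M : ℕ} (hK : 2 ≤ K) {R : Fin K → Matrix (Fin N) (Fin N) ℝ}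
    (hR : ∀ k n, R k n n ≠ 0) (g : Fin N → Fin K → Fin M → ℝ) {β : Fin K → ℝ}
    (hβ : ∀ k, 0 < β k) (βR : ℝ) {σ2 α P : ℝ} (hσ : 0 < σ2) (hα : 0 < α) (hP : 0 < P) :
    BddAbove (coopSet R g β βR σ2 α P) := by
  refine ⟨∑ k, ∑ n, (1 / ((K : ℝ) - 1)) * max 0 ((α / 2) * (Real.logb 2 P +
    Real.logb 2 ((R k n n) ^ 2 * (((K : ℝ) - 1) * β k) / σ2))), ?_⟩
  rintro s ⟨r, p, Q, hp, -, -, hup, -, rfl⟩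
  exact (Finset.sum_le_sum fun k _ => hup k).trans (Finset.sum_le_sum fun k _ =>
    Finset.sum_le_sum fun n _ => uplinkCap_le hK hR hβ hσ hα hP hp k n)

/-- A larger pre-log factor wins over any additive constants. -/
lemma eventually_logb_le {a b : ℝ} (hab : a < b) (c d : ℝ) :
    ∀ᶠ P : ℝ in atTop, a * (Real.logb 2 P + c) ≤ b * (Real.logb 2 P + d) := by
  filter_upwards [(Real.tendsto_logb_atTop (b := 2) (by norm_num)).eventually_ge_atTop
    ((a * c - b * d) / (b - a))] with P hP
  rw [div_le_iff₀ (by linarith)] at hP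
  nlinarith

/-- The data on the downlink channels used below: `δ k n` are the squared diagonal entries of a
triangular factorization of the Gram matrix of `g_{1,k}, …, g_{N,k}`. They bound every distributed
downlink constraint from below, and, up to a constant `c k` added to the signal-to-noise ratio,
every cooperative downlink constraint from above. -/
def DownlinkGains {K N M : ℕ} (g : Fin N → Fin K → Fin M → ℝ) (δ : Fin K → Fin N → ℝ)
    (c : Fin K → ℝ) : Prop :=
  (∀ k n, 0 < δ k n) ∧ (∀ k, 0 < c k) ∧
  (∀ k t, 0 < t → ∀ S : Finset (Fin N), ∑ n ∈ S, Real.logb 2 (t * δ k n) ≤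
    Real.logb 2 (1 + t • ∑ n ∈ S, Matrix.vecMulVec (g n k) (g n k)).det) ∧
  (∀ k (Q : Matrix (Fin N) (Fin N) ℝ) (s τ : ℝ), 0 < s → 0 < τ → Q.PosSemidef →
    Q.trace ≤ N * τ → Real.logb 2 (1 + s • (Gmat g k * Q * (Gmat g k)ᵀ)).det ≤
      ∑ n, Real.logb 2 ((s * τ + c k) * δ k n))

lemma exists_downlinkGains {K N M : ℕ} (hN : 1 ≤ N) (g : Fin N → Fin K → Fin M → ℝ)
    (hg : ∀ k, LinearIndependent ℝ (fun n => g n k)) : ∃ δ c, DownlinkGains g δ c := by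
  choose hA δ hδ hprod hlow using fun k => exists_stream_gains (fun n => g n k) (hg k)
  choose c hc hup using fun k => exists_det_upper hN (Gmat g k) (hA k)
  refine ⟨δ, c, hδ, hc, fun k t ht S => ?_, fun k Q s τ hs hτ hQ htr => ?_⟩
  · rw [← Real.logb_prod _ _ fun n _ => (mul_pos ht (hδ k n)).ne']
    exact Real.logb_le_logb_of_le (by norm_num)
      (Finset.prod_pos fun n _ => mul_pos ht (hδ k n)) (hlow k t ht S)
  · obtain ⟨h1, h2⟩ := hup k Q s τ hs hQ htr
    have h3 : 0 < s * τ + c k := add_pos (mul_pos hs hτ) (hc k)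
    rw [← Real.logb_prod _ _ fun n _ => (mul_pos h3 (hδ k n)).ne']
    refine Real.logb_le_logb_of_le (by norm_num) h1 (h2.trans (le_of_eq ?_))
    rw [Finset.prod_mul_distrib, hprod k, Finset.prod_const, Finset.card_univ, Fintype.card_fin,
      mul_comm]
    rfl

/-! ### The uplink-limited regime -/

/-- For `α < 1/2` and large power, the uplink bounds of every feasible power allocation
are simultaneously achieved by the distributed relays. -/
lemma eventually_uplink_mem_distSet {K N M : ℕ} (hK : 2 ≤ K)
    {R : Fin K → Matrix (Fin N) (Fin N) ℝ} (hR : ∀ k n, R k n n ≠ 0)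
    {g : Fin N → Fin K → Fin M → ℝ} {δ : Fin K → Fin N → ℝ} {c : Fin K → ℝ}
    (hgain : DownlinkGains g δ c) {β : Fin K → ℝ} (hβ : ∀ k, 0 < β k) {βR σ2 α : ℝ}
    (hβR : 0 < βR) (hσ : 0 < σ2) (hα : 0 < α) (hα' : α < 1 / 2) :
    ∀ᶠ P : ℝ in atTop, ∀ p : Fin K → Fin N → ℝ, PowerFeasible β P p →
      ∑ k, ∑ n, uplinkCap R σ2 α p k n ∈ distSet R g β βR σ2 α P := by
  obtain ⟨hδ, hc, hlow, -⟩ := hgain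
  have hκ0 : (0 : ℝ) < (K : ℝ) - 1 := by linarith [one_le_natCast_sub_one hK]
  have hev : ∀ᶠ P : ℝ in atTop, ∀ k k' : Fin K, ∀ n : Fin N,
      0 * (Real.logb 2 P + 0) ≤ (1 - α) / 2 * (Real.logb 2 P + Real.logb 2 (βR / σ2 * δ k n)) ∧
      α / 2 * (Real.logb 2 P + Real.logb 2 ((R k' n n) ^ 2 * (((K : ℝ) - 1) * β k') / σ2)) ≤
        (1 - α) / 2 * (Real.logb 2 P + Real.logb 2 (βR / σ2 * δ k n)) := by
    simp only [eventually_all]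
    exact fun k k' n => (eventually_logb_le (by linarith) _ _).and
      (eventually_logb_le (by linarith) _ _)
  filter_upwards [hev, eventually_gt_atTop 0] with P hP hP0 p hp
  refine ⟨_, p, hp, fun k n => le_rfl, fun k S => ?_, rfl⟩
  have ht : 0 < βR * P / σ2 := by positivity
  refine le_trans ?_ (mul_le_mul_of_nonneg_left (hlow k _ ht S) (by linarith))
  rw [Finset.mul_sum]
  refine Finset.sum_le_sum fun n _ => ?_
  have hlog : Real.logb 2 (βR * P / σ2 * δ k n) =
      Real.logb 2 P + Real.logb 2 (βR / σ2 * δ k n) := by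
    have := hδ k n
    rw [← Real.logb_mul hP0.ne' (by positivity)]; congr 1; ring
  rw [hlog]
  have hterm : ∀ k' ∈ Finset.univ.erase k, uplinkCap R σ2 α p k' n ≤
      (1 / ((K : ℝ) - 1)) * ((1 - α) / 2 *
        (Real.logb 2 P + Real.logb 2 (βR / σ2 * δ k n))) := fun k' _ => by
    refine (uplinkCap_le hK hR hβ hσ hα hP0 hp k' n).trans ?_
    have := hP k k' n
    exact mul_le_mul_of_nonneg_left (max_le (by simpa using this.1) this.2) (by positivity)
  refine (Finset.sum_le_card_nsmul _ _ _ hterm).trans (le_of_eq ?_)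
  rw [Finset.card_erase_of_mem (Finset.mem_univ k), Finset.card_univ, Fintype.card_fin,
    nsmul_eq_mul, Nat.cast_sub (by omega), Nat.cast_one]
  field_simp

/-! ### The downlink-limited regime -/

lemma sum_sum_erase {K : ℕ} (r : Fin K → ℝ) :
    ∑ k, ∑ k' ∈ Finset.univ.erase k, r k' = ((K : ℝ) - 1) * ∑ k, r k := by
  simp only [Finset.sum_erase_eq_sub (Finset.mem_univ _), Finset.sum_sub_distrib,
    Finset.sum_const, Finset.card_univ, Fintype.card_fin, nsmul_eq_mul]
  ring

/-- For `α > 1/2` and large power, the distributed relays meet all full-set downlink bounds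
`∑ n, (1-α)/2 * log (t δ k n)` with equality. -/
lemma eventually_downlink_mem_distSet {K N M : ℕ} (hK : 2 ≤ K) (hN : 1 ≤ N)
    {R : Fin K → Matrix (Fin N) (Fin N) ℝ} (hR : ∀ k n, R k n n ≠ 0)
    {g : Fin N → Fin K → Fin M → ℝ} {δ : Fin K → Fin N → ℝ} {c : Fin K → ℝ}
    (hgain : DownlinkGains g δ c) {β : Fin K → ℝ} (hβ : ∀ k, 0 < β k) {βR σ2 α : ℝ}
    (hβR : 0 < βR) (hσ : 0 < σ2) (hα : 1 / 2 < α) (hα' : α < 1) :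
    ∀ᶠ P : ℝ in atTop, (1 / ((K : ℝ) - 1)) *
      ∑ k, ∑ n, (1 - α) / 2 * Real.logb 2 (βR * P / σ2 * δ k n) ∈ distSet R g β βR σ2 α P := by
  obtain ⟨hδ, hc, hlow, -⟩ := hgain
  have hκ0 : (0 : ℝ) < (K : ℝ) - 1 := by linarith [one_le_natCast_sub_one hK]
  have hN0 : (0 : ℝ) < N := by exact_mod_cast hN
  set w : Fin K → Fin N → ℝ := fun k n => Real.logb 2 (βR / σ2 * δ k n) with hw
  have hev : ∀ᶠ P : ℝ in atTop, ∀ k : Fin K, ∀ n : Fin N,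
      (1 - α) / 2 * (Real.logb 2 P + (∑ k', w k' n - ((K : ℝ) - 1) * w k n)) ≤
      α / 2 * (Real.logb 2 P +
        Real.logb 2 ((R k n n) ^ 2 * (((K : ℝ) - 1) * β k / (2 * N)) / σ2)) := by
    simp only [eventually_all]
    exact fun k n => eventually_logb_le (by linarith) _ _
  filter_upwards [hev, eventually_gt_atTop 0] with P hP hP0
  have ht : 0 < βR * P / σ2 := by positivity
  have hlog : ∀ k n, Real.logb 2 (βR * P / σ2 * δ k n) = Real.logb 2 P + w k n := fun k n => by
    have := hδ k n
    rw [hw, ← Real.logb_mul hP0.ne' (by positivity)]; congr 1; ring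
  set x : Fin K → Fin N → ℝ := fun k n =>
    (1 - α) / 2 * Real.logb 2 (βR * P / σ2 * δ k n) with hx
  -- the solution of the linear system `∑ k' ≠ k, r k' n = x k n`
  set r : Fin K → Fin N → ℝ := fun k n => (1 / ((K : ℝ) - 1)) * ∑ k', x k' n - x k n with hr
  have hsum : ∀ n, ∑ k, r k n = (1 / ((K : ℝ) - 1)) * ∑ k, x k n := fun n => by
    simp only [hr, Finset.sum_sub_distrib, Finset.sum_const, Finset.card_univ, Fintype.card_fin,
      nsmul_eq_mul]
    field_simp
    ring
  refine ⟨r, _, powerFeasible_equal hK hN hβ hP0, fun k n => ?_, fun k S => ?_, ?_⟩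
  · unfold uplinkCap
    have hβk := hβ k
    have hR2 : 0 < (R k n n) ^ 2 := by have := hR k n; positivity
    have h1 : Real.logb 2 ((R k n n) ^ 2 * (((K : ℝ) - 1) * β k / (2 * N) * P) / σ2) =
        Real.logb 2 P + Real.logb 2 ((R k n n) ^ 2 * (((K : ℝ) - 1) * β k / (2 * N)) / σ2) := by
      rw [← Real.logb_mul hP0.ne' (by positivity)]; congr 1; ring
    have h2 : r k n = (1 / ((K : ℝ) - 1)) * ((1 - α) / 2 *
        (Real.logb 2 P + (∑ k', w k' n - ((K : ℝ) - 1) * w k n))) := by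
      simp only [hr, hx, hlog, ← Finset.mul_sum, Finset.sum_add_distrib, Finset.sum_const,
        Finset.card_univ, Fintype.card_fin, nsmul_eq_mul]
      field_simp
      ring
    rw [h1, h2]
    exact mul_le_mul_of_nonneg_left ((hP k n).trans (le_max_right _ _)) (by positivity)
  · refine le_trans (le_of_eq ?_) (mul_le_mul_of_nonneg_left (hlow k _ ht S) (by linarith))
    rw [Finset.mul_sum]
    refine Finset.sum_congr rfl fun n _ => ?_
    rw [Finset.sum_erase_eq_sub (Finset.mem_univ k), hsum n]
    simp only [hr, hx]; ring
  · rw [Finset.sum_comm (f := r), Finset.sum_comm, Finset.mul_sum]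
    exact Finset.sum_congr rfl fun n _ => (hsum n).symm

/-- Summing the cooperative downlink constraints over the users bounds the sum-rate. -/
lemma coopSet_le_downlink {K N M : ℕ} (hK : 2 ≤ K)
    {R : Fin K → Matrix (Fin N) (Fin N) ℝ}
    {g : Fin N → Fin K → Fin M → ℝ} {δ : Fin K → Fin N → ℝ} {c : Fin K → ℝ}
    (hgain : DownlinkGains g δ c) {β : Fin K → ℝ} {βR σ2 α P : ℝ}
    (hβR : 0 < βR) (hσ : 0 < σ2) (hα' : α < 1) (hP : 0 < P) :
    ∀ s ∈ coopSet R g β βR σ2 α P, s ≤ (1 / ((K : ℝ) - 1)) *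
      ∑ k, ∑ n, (1 - α) / 2 * Real.logb 2 ((βR * P / σ2 + c k) * δ k n) := by
  rintro s ⟨r, p, Q, -, hQ, htr, -, hdown, rfl⟩
  have hκ0 : (0 : ℝ) < (K : ℝ) - 1 := by linarith [one_le_natCast_sub_one hK]
  rw [one_div, le_inv_mul_iff₀ hκ0, ← sum_sum_erase]
  refine Finset.sum_le_sum fun k _ => (hdown k).trans ?_
  rw [← Finset.mul_sum]
  refine mul_le_mul_of_nonneg_left ?_ (by linarith)
  have h := hgain.2.2.2 k Q σ2⁻¹ (βR * P) (inv_pos.2 hσ) (mul_pos hβR hP) hQ (by linarith)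
  rwa [inv_mul_eq_div] at h

/-- The gap between the cooperative upper bound and the distributed sum-rate vanishes. -/
lemma tendsto_downlink_gap {K N : ℕ} (δ : Fin K → Fin N → ℝ) (hδ : ∀ k n, 0 < δ k n)
    (c : Fin K → ℝ) (hc : ∀ k, 0 < c k) {βR σ2 : ℝ} (α : ℝ) (hβR : 0 < βR) (hσ : 0 < σ2) :
    Tendsto (fun P : ℝ => (1 / ((K : ℝ) - 1)) *
        ∑ k, ∑ n, (1 - α) / 2 * Real.logb 2 ((βR * P / σ2 + c k) * δ k n) -
      (1 / ((K : ℝ) - 1)) *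
        ∑ k, ∑ n, (1 - α) / 2 * Real.logb 2 (βR * P / σ2 * δ k n)) atTop (nhds 0) := by
  have ht : Tendsto (fun P : ℝ => βR * P / σ2) atTop atTop :=
    (tendsto_id.const_mul_atTop hβR).atTop_div_const hσ
  have hk : ∀ k : Fin K, Tendsto (fun P : ℝ => Real.logb 2 (1 + c k / (βR * P / σ2))) atTop
      (nhds 0) := fun k => by
    have h1 : Tendsto (fun P : ℝ => 1 + c k / (βR * P / σ2)) atTop (nhds 1) := by
      simpa using (ht.const_div_atTop (c k)).const_add 1
    have h2 := ((Real.continuousAt_log one_ne_zero).tendsto.comp h1).div_const (Real.log 2)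
    simpa [Real.logb, Function.comp_def] using h2
  have hsum : Tendsto (fun P : ℝ => (1 / ((K : ℝ) - 1)) *
      ∑ k : Fin K, ∑ _n : Fin N, (1 - α) / 2 * Real.logb 2 (1 + c k / (βR * P / σ2))) atTop
      (nhds ((1 / ((K : ℝ) - 1)) * ∑ _k : Fin K, ∑ _n : Fin N, (1 - α) / 2 * 0)) :=
    (tendsto_finsetSum _ fun k _ => tendsto_finsetSum _ fun n _ =>
      (hk k).const_mul _).const_mul _
  simp only [mul_zero, Finset.sum_const_zero] at hsum
  refine hsum.congr' ?_
  filter_upwards [eventually_gt_atTop 0] with P hP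
  rw [← mul_sub, ← Finset.sum_sub_distrib]
  congr 1
  refine Finset.sum_congr rfl fun k _ => ?_
  rw [← Finset.sum_sub_distrib]
  refine Finset.sum_congr rfl fun n _ => ?_
  have h1 : 0 < βR * P / σ2 := by positivity
  have h2 := hc k
  have h3 := hδ k n
  rw [← mul_sub, ← Real.logb_div (by positivity) (by positivity)]
  congr 2
  field_simp

/-- for every time-splitting factor `α ∈ (0,1/2) ∪ (1/2,1)`, the difference
`R_coop(P) − R_dist(P)` tends to `0` as the power level `P` tends to infinity. -/
theorem rcoop_sub_rdist_tendsto_zero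
    {K N M : ℕ} (hK : 2 ≤ K) (hN : 1 ≤ N) (hM : N ≤ M)
    (H : Fin K → Matrix (Fin N) (Fin M) ℝ)
    (R : Fin K → Matrix (Fin N) (Fin N) ℝ) (U : Fin K → Matrix (Fin N) (Fin M) ℝ)
    (hH : ∀ k, H k = R k * U k)
    (hRtri : ∀ k, (R k).BlockTriangular id)
    (hRdiag : ∀ k n, R k n n ≠ 0)
    (hU : ∀ k, U k * (U k)ᵀ = 1)
    (g : Fin N → Fin K → Fin M → ℝ)
    (hg : ∀ k, LinearIndependent ℝ (fun n => g n k))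
    (β : Fin K → ℝ) (hβ : ∀ k, 0 < β k)
    (βR σ2 : ℝ) (hβR : 0 < βR) (hσ : 0 < σ2)
    (α : ℝ) (hα : α ∈ Set.Ioo (0:ℝ) (1/2) ∪ Set.Ioo (1/2 : ℝ) 1) :
    Tendsto (fun P : ℝ => Rcoop R g β βR σ2 α P - Rdist R g β βR σ2 α P)
      atTop (nhds 0) := by
  obtain ⟨δ, c, hgain⟩ := exists_downlinkGains hN g hg
  have hα0 : 0 < α := by rcases hα with h | h <;> linarith [h.1]
  have hα1 : α < 1 := by rcases hα with h | h <;> linarith [h.2]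
  -- in each regime, `Rcoop ≤ Rdist + f P` with `f P → 0`
  obtain ⟨f, hf, hev⟩ : ∃ f : ℝ → ℝ, Tendsto f atTop (nhds 0) ∧ ∀ᶠ P : ℝ in atTop,
      (distSet R g β βR σ2 α P).Nonempty ∧ ∀ s ∈ coopSet R g β βR σ2 α P,
        ∃ s' ∈ distSet R g β βR σ2 α P, s ≤ s' + f P := by
    rcases hα with h | h
    · refine ⟨fun _ => 0, tendsto_const_nhds, ?_⟩
      filter_upwards [eventually_uplink_mem_distSet hK hRdiag hgain hβ hβR hσ h.1 h.2,
        eventually_gt_atTop 0] with P hP hP0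
      refine ⟨⟨_, hP _ (powerFeasible_equal hK hN hβ hP0)⟩, ?_⟩
      rintro s ⟨r, p, Q, hp, -, -, hup, -, rfl⟩
      exact ⟨_, hP p hp, by rw [add_zero]; exact Finset.sum_le_sum fun k _ => hup k⟩
    · refine ⟨_, tendsto_downlink_gap δ hgain.1 c hgain.2.1 α hβR hσ, ?_⟩
      filter_upwards [eventually_downlink_mem_distSet hK hN hRdiag hgain hβ hβR hσ h.1 h.2,
        eventually_gt_atTop 0] with P hP hP0
      refine ⟨⟨_, hP⟩, fun s hs => ⟨_, hP, ?_⟩⟩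
      rw [add_sub_cancel]
      exact coopSet_le_downlink hK hgain hβR hσ hα1 hP0 s hs
  refine tendsto_of_tendsto_of_tendsto_of_le_of_le' tendsto_const_nhds hf ?_ ?_
  · filter_upwards [hev, eventually_gt_atTop 0] with P hP hP0
    rw [Rcoop_eq_sSup, Rdist_eq_sSup, sub_nonneg]
    exact csSup_le_csSup (coopSet_bddAbove hK hRdiag g hβ βR hσ hα0 hP0) hP.1
      (distSet_subset_coopSet R g β βR σ2 α P (mul_pos hβR hP0))
  · filter_upwards [hev, eventually_gt_atTop 0] with P hP hP0
    have hsub := distSet_subset_coopSet R g β βR σ2 α P (mul_pos hβR hP0)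
    have hbdd := (coopSet_bddAbove hK hRdiag g hβ βR hσ hα0 hP0).mono hsub
    rw [Rcoop_eq_sSup, Rdist_eq_sSup, sub_le_iff_le_add']
    refine csSup_le (hP.1.mono hsub) fun s hs => ?_
    obtain ⟨s', hs', hle⟩ := hP.2 s hs
    linarith [le_csSup hbdd hs']
end

section
/- Under the stated hypotheses with K = 2 users, for every time-splitting factor α ∈ (0,1/2) ∪ (1/2,1), the difference C_cut(P) − R_dist(P) tends to 0 as the power level P tends to infinity; that is, the proposed distributive lattice-coding scheme asymptotically achieves the cut-set sum-rate upper bound in the high-SNR regime. -/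
/-!
Both suprema are squeezed between the same quantity `F(P)` and `F(P) + ε(P)` with `ε(P) → 0`.
Here `F` is the sum over the two flows (user `k'` to user `k ≠ k'`) of
`min (u_{k'}(P)) (d_k(P))`, where, with `a_{k'} = β_{k'} / (N σ²)` and `b = β_R / σ²`,

* `u_{k'}(P) = (α/2) log₂ (∏ₙ r_{k'}(n,n)² · (a_{k'} P)^N)` is the high-SNR uplink capacity,
* `d_k(P) = ((1-α)/2) log₂ (det (G_kᵀ G_k) · (b P)^N)` is the high-SNR downlink capacity.

*Upper bounds.* For `K` positive definite and `X` positive semidefinite with `tr X ≤ N x`, the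
AM-GM inequality for the eigenvalues of `K⁻¹ + X` gives
`det (1 + X K) ≤ det K · (tr K⁻¹ / N + x)^N` (`det_one_add_mul_le`), which exceeds `det K · x^N`
by a factor tending to `1` as `x → ∞`. This bounds both cut-set terms, and also the sum of the
lattice rates: take `K` and `X` diagonal.

*Lower bound for the cut-set bound.* Isotropic covariances attain `F(P)`, because
`det (1 + x K) ≥ x^N det K` (`pow_mul_det_le`).

*Lower bound for the distributive scheme.* Use uniform powers. If `α < 1/2`, take the full uplink
rates; if `α > 1/2`, take the successive-decoding corner point of the downlink multiple-access
region, whose rates are the logarithms of the ratios of consecutive determinants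
`det (1 + c ∑_{i ≤ n} gᵢ gᵢᵀ) / det (1 + c ∑_{i < n} gᵢ gᵢᵀ)`. By antitonicity of the matrix
inverse the corner point satisfies every subset constraint (`prod_cornerGain_le`), with equality
for the full set (`prod_cornerGain_eq`). By linear independence each ratio grows linearly in `c`
(`exists_cornerGain_ge`), so every corner rate is `((1-α)/2) log₂ P + O(1)` while every uplink
rate is `(α/2) log₂ P + O(1)`. For `α ≠ 1/2` one of the two rate vectors is therefore eventually
below the other in every coordinate, hence feasible (`flow_achievable`). At `α = 1/2` this
comparison is not available.
-/

open Matrix Filter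

/-- The downlink channel matrix `G_k ∈ ℝ^{M×N}` whose columns are the vectors
`g_{1,k}, …, g_{N,k}`. -/
def Gmat2 {N M : ℕ} (g : Fin N → Fin 2 → Fin M → ℝ) (k : Fin 2) :
    Matrix (Fin M) (Fin N) ℝ :=
  Matrix.of fun i n => g n k i

/-- `R_dist(P)` for `K = 2` users: the supremum of `Σ_{k=1}^2 Σ_n R_{k,n}` subject to
the uplink per-stream constraints (i), the downlink MAC constraints (ii) (over the other
user `k' ≠ k` and every subset `S` of relays), and the power constraints (iii). -/
noncomputable def RdistTwo {N M : ℕ} (R : Fin 2 → Matrix (Fin N) (Fin N) ℝ)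
    (g : Fin N → Fin 2 → Fin M → ℝ) (β : Fin 2 → ℝ) (βR σ2 α P : ℝ) : ℝ :=
  sSup {s : ℝ | ∃ r p : Fin 2 → Fin N → ℝ,
    (∀ k n, 0 < p k n) ∧
    (∀ k n, r k n ≤ max 0 ((α / 2) * Real.logb 2 ((R k n n) ^ 2 * p k n / σ2))) ∧
    (∀ k k' : Fin 2, k' ≠ k → ∀ S : Finset (Fin N),
      ∑ n ∈ S, r k' n ≤
        ((1 - α) / 2) * Real.logb 2
          (1 + (βR * P / σ2) • ∑ n ∈ S, Matrix.vecMulVec (g n k) (g n k)).det) ∧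
    (∀ k, ∑ n, p k n ≤ β k * P) ∧
    s = ∑ k, ∑ n, r k n}

/-- The cut-set sum-rate bound `C_cut(P)` for the two-user MIMO distributed-relay
channel: the supremum over user covariances `Q_1, Q_2` (symmetric PSD,
`trace Q_k ≤ β_k·P`) and super-relay covariance `Q_R` (symmetric PSD,
`trace Q_R ≤ N·β_R·P`) of the sum of the two min-cut expressions. -/
noncomputable def CcutTwo {N M : ℕ} (H : Fin 2 → Matrix (Fin N) (Fin M) ℝ)
    (g : Fin N → Fin 2 → Fin M → ℝ) (β : Fin 2 → ℝ) (βR σ2 α P : ℝ) : ℝ :=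
  sSup {s : ℝ | ∃ (Q : Fin 2 → Matrix (Fin M) (Fin M) ℝ)
      (QR : Matrix (Fin N) (Fin N) ℝ),
    (∀ k, (Q k).PosSemidef ∧ (Q k).trace ≤ β k * P) ∧
    QR.PosSemidef ∧ QR.trace ≤ (N : ℝ) * βR * P ∧
    s = min ((α / 2) * Real.logb 2 (1 + σ2⁻¹ • (H 1 * Q 1 * (H 1)ᵀ)).det)
          (((1 - α) / 2) * Real.logb 2
            (1 + σ2⁻¹ • (Gmat2 g 0 * QR * (Gmat2 g 0)ᵀ)).det)
        + min ((α / 2) * Real.logb 2 (1 + σ2⁻¹ • (H 0 * Q 0 * (H 0)ᵀ)).det)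
            (((1 - α) / 2) * Real.logb 2
              (1 + σ2⁻¹ • (Gmat2 g 1 * QR * (Gmat2 g 1)ᵀ)).det)}

/-! ### Determinant bounds for positive definite matrices -/

/-- AM-GM for the eigenvalues. -/
theorem det_le_trace_pow {N : ℕ} (hN : 1 ≤ N) {Y : Matrix (Fin N) (Fin N) ℝ}
    (hY : Y.PosSemidef) : Y.det ≤ (Y.trace / N) ^ N := by
  have hN' : (0 : ℝ) < N := by exact_mod_cast hN
  have hdet : Y.det = ∏ i, hY.1.eigenvalues i := by
    simpa using hY.1.det_eq_prod_eigenvalues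
  have htr : Y.trace = ∑ i, hY.1.eigenvalues i := by
    simpa using hY.1.trace_eq_sum_eigenvalues
  have hnn := hY.eigenvalues_nonneg
  have h := Real.geom_mean_le_arith_mean Finset.univ (fun _ : Fin N => (1 : ℝ))
    hY.1.eigenvalues (fun _ _ => zero_le_one) (by simpa using hN') (fun i _ => hnn i)
  simp only [Real.rpow_one, Finset.sum_const, Finset.card_univ, Fintype.card_fin, nsmul_eq_mul,
    mul_one, one_mul] at h
  rw [← hdet, ← htr] at h
  have h0 : 0 ≤ Y.det := hY.det_nonneg
  calc Y.det = (Y.det ^ ((N : ℝ)⁻¹)) ^ N := by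
        rw [Real.rpow_inv_natCast_pow h0 (by omega)]
    _ ≤ _ := pow_le_pow_left₀ (Real.rpow_nonneg h0 _) h N

/-- The water-filling upper bound: factor `1 + X K = (K⁻¹ + X) K` and apply AM-GM to `K⁻¹ + X`. -/
theorem det_one_add_mul_le {N : ℕ} (hN : 1 ≤ N) {K X : Matrix (Fin N) (Fin N) ℝ}
    (hK : K.PosDef) (hX : X.PosSemidef) {x : ℝ} (hx : X.trace ≤ N * x) :
    (1 + X * K).det ≤ K.det * (K⁻¹.trace / N + x) ^ N := by
  have hN' : (0 : ℝ) < N := by exact_mod_cast hN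
  have hu : IsUnit K.det := hK.det_pos.ne'.isUnit
  have e : 1 + X * K = (K⁻¹ + X) * K := by
    rw [add_mul, Matrix.nonsing_inv_mul _ hu]
  have hY : (K⁻¹ + X).PosSemidef := hK.inv.posSemidef.add hX
  rw [e, Matrix.det_mul, mul_comm]
  refine mul_le_mul_of_nonneg_left ((det_le_trace_pow hN hY).trans ?_) hK.det_pos.le
  refine pow_le_pow_left₀ (div_nonneg hY.trace_nonneg hN'.le) ?_ N
  rw [Matrix.trace_add, add_div]
  gcongr
  rwa [div_le_iff₀' hN']

theorem one_le_det_one_add_s1 {N : ℕ} {B : Matrix (Fin N) (Fin N) ℝ} (hB : B.PosSemidef) :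
    1 ≤ (1 + B).det := by
  -- the characteristic polynomial at `-1` is `det (-(1 + B))`, a product over the eigenvalues
  have h := congrArg (Polynomial.eval (-1)) hB.1.charpoly_eq
  rw [Matrix.eval_charpoly, Polynomial.eval_prod] at h
  have e : (Matrix.scalar (Fin N)) (-1 : ℝ) - B = -(1 + B) := by
    rw [map_neg, map_one]; abel
  have e2 : ∀ i, Polynomial.eval (-1) (Polynomial.X - Polynomial.C ((hB.1.eigenvalues i : ℝ)))
      = -1 * (1 + hB.1.eigenvalues i) := by intro i; simp; ring
  rw [e, Matrix.det_neg] at h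
  simp only [RCLike.ofReal_real_eq_id, id, e2, Finset.prod_mul_distrib, Finset.prod_const,
    Finset.card_univ] at h
  rw [mul_left_cancel₀ (by positivity) h]
  have := hB.eigenvalues_nonneg
  exact Finset.one_le_prod (fun i _ => by linarith [this i])

theorem pow_mul_det_le {N : ℕ} {K : Matrix (Fin N) (Fin N) ℝ} (hK : K.PosDef) {x : ℝ}
    (hx : 0 < x) : K.det * x ^ N ≤ (1 + x • K).det := by
  have hu : IsUnit K.det := hK.det_pos.ne'.isUnit
  have e : 1 + x • K = x • ((1 + x⁻¹ • K⁻¹) * K) := by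
    rw [add_mul, smul_mul_assoc, Matrix.nonsing_inv_mul _ hu, smul_add, smul_smul,
      mul_inv_cancel₀ hx.ne', one_smul, one_mul, add_comm]
  have h1 := one_le_det_one_add_s1 (hK.inv.posSemidef.smul (inv_nonneg.2 hx.le))
  rw [e, Matrix.det_smul, Matrix.det_mul, Fintype.card_fin]
  have := hK.det_pos
  have : 0 < x ^ N := by positivity
  nlinarith [mul_pos hK.det_pos this]

/-- The variational bound for the inverse: the right-hand side is the maximum of the left-hand
side over `y`, attained at `y = A⁻¹ x`. -/
theorem two_mul_dotProduct_sub_le {m : ℕ} {A : Matrix (Fin m) (Fin m) ℝ} (hA : A.PosDef)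
    (x y : Fin m → ℝ) : 2 * (x ⬝ᵥ y) - y ⬝ᵥ (A *ᵥ y) ≤ x ⬝ᵥ (A⁻¹ *ᵥ x) := by
  have hu : IsUnit A.det := hA.det_pos.ne'.isUnit
  have hT : Aᵀ = A := by simpa [Matrix.IsHermitian] using hA.1
  have h := hA.posSemidef.dotProduct_mulVec_nonneg (y - A⁻¹ *ᵥ x)
  have h1 : A *ᵥ (A⁻¹ *ᵥ x) = x := by
    rw [Matrix.mulVec_mulVec, Matrix.mul_nonsing_inv _ hu, Matrix.one_mulVec]
  have h2 : (A⁻¹ *ᵥ x) ⬝ᵥ (A *ᵥ y) = x ⬝ᵥ y := by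
    rw [Matrix.dotProduct_mulVec, ← Matrix.mulVec_transpose, hT, h1]
  rw [star_trivial, Matrix.mulVec_sub, h1, sub_dotProduct, dotProduct_sub, dotProduct_sub, h2,
    dotProduct_comm y x, dotProduct_comm (A⁻¹ *ᵥ x) x] at h
  linarith

theorem inv_antitone {m : ℕ} {A B : Matrix (Fin m) (Fin m) ℝ} (hA : A.PosDef) (hB : B.PosDef)
    (hAB : (B - A).PosSemidef) (x : Fin m → ℝ) :
    x ⬝ᵥ (B⁻¹ *ᵥ x) ≤ x ⬝ᵥ (A⁻¹ *ᵥ x) := by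
  have hu : IsUnit B.det := hB.det_pos.ne'.isUnit
  have h := two_mul_dotProduct_sub_le hA x (B⁻¹ *ᵥ x)
  have h2 := hAB.dotProduct_mulVec_nonneg (B⁻¹ *ᵥ x)
  have h1 : B *ᵥ (B⁻¹ *ᵥ x) = x := by
    rw [Matrix.mulVec_mulVec, Matrix.mul_nonsing_inv _ hu, Matrix.one_mulVec]
  rw [star_trivial, Matrix.sub_mulVec, h1, dotProduct_sub, dotProduct_comm _ x] at h2
  linarith

/-! ### The corner point of the downlink multiple-access region -/

/-- The matrix `1 + c ∑_{n ∈ S} vₙ vₙᵀ`, the normalized covariance of the signal a user receives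
when the relays in `S` transmit at signal-to-noise ratio `c` and the others are silent. -/
noncomputable def macCov {N M : ℕ} (v : Fin N → Fin M → ℝ) (c : ℝ) (S : Finset (Fin N)) :
    Matrix (Fin M) (Fin M) ℝ :=
  1 + c • ∑ n ∈ S, Matrix.vecMulVec (v n) (v n)

section corner
variable {N M : ℕ} (v : Fin N → Fin M → ℝ) {c : ℝ}

theorem sum_vecMulVec_posSemidef (S : Finset (Fin N)) :
    (∑ n ∈ S, Matrix.vecMulVec (v n) (v n)).PosSemidef :=
  Matrix.posSemidef_sum _ fun n _ => by simpa using Matrix.posSemidef_vecMulVec_self_star (v n)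

theorem macCov_posDef (hc : 0 ≤ c) (S : Finset (Fin N)) : (macCov v c S).PosDef :=
  Matrix.PosDef.one.add_posSemidef ((sum_vecMulVec_posSemidef v S).smul hc)

/-- The matrix determinant lemma for adding one relay. -/
theorem macCov_det_insert (hc : 0 ≤ c) {S : Finset (Fin N)} {n : Fin N} (hn : n ∉ S) :
    (macCov v c (insert n S)).det
      = (macCov v c S).det * (1 + c * (v n ⬝ᵥ ((macCov v c S)⁻¹ *ᵥ v n))) := by
  have hu : IsUnit (macCov v c S).det := (macCov_posDef v hc S).det_pos.ne'.isUnit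
  have e : macCov v c (insert n S) = macCov v c S
      + Matrix.replicateCol Unit (c • v n) * Matrix.replicateRow Unit (v n) := by
    rw [← Matrix.vecMulVec_eq, Matrix.smul_vecMulVec, macCov, macCov, Finset.sum_insert hn,
      smul_add]
    abel
  rw [e, Matrix.det_add_replicateCol_mul_replicateRow hu, Matrix.mul_assoc,
    ← Matrix.replicateCol_mulVec]
  congr 1
  rw [Matrix.det_unique, Matrix.add_apply, Matrix.one_apply_eq,
    Matrix.replicateRow_mul_replicateCol_apply, Matrix.mulVec_smul, dotProduct_smul, smul_eq_mul]

theorem macCov_inv_antitone (hc : 0 ≤ c) {S T : Finset (Fin N)} (h : S ⊆ T) (x : Fin M → ℝ) :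
    x ⬝ᵥ ((macCov v c T)⁻¹ *ᵥ x) ≤ x ⬝ᵥ ((macCov v c S)⁻¹ *ᵥ x) := by
  refine inv_antitone (macCov_posDef v hc S) (macCov_posDef v hc T) ?_ x
  have : macCov v c T - macCov v c S = c • ∑ n ∈ T \ S, Matrix.vecMulVec (v n) (v n) := by
    rw [macCov, macCov, ← Finset.sum_sdiff h, smul_add]; abel
  rw [this]
  exact (sum_vecMulVec_posSemidef v _).smul hc

/-- `1 + c vₙᵀ (1 + c ∑_{i < n} vᵢ vᵢᵀ)⁻¹ vₙ`: one plus the signal-to-interference-and-noise ratio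
of relay `n` under successive decoding in which only the relays `i < n` still interfere. The order
of `Fin N` fixes the decoding order, hence the corner of the region. -/
noncomputable def cornerGain (c : ℝ) (n : Fin N) : ℝ :=
  1 + c * (v n ⬝ᵥ ((macCov v c (Finset.univ.filter (· < n)))⁻¹ *ᵥ v n))

theorem one_le_cornerGain (hc : 0 ≤ c) (n : Fin N) : 1 ≤ cornerGain v c n := by
  have := (macCov_posDef v hc (Finset.univ.filter (· < n))).inv.posSemidef.dotProduct_mulVec_nonneg
    (v n)
  rw [star_trivial] at this
  unfold cornerGain
  nlinarith [mul_nonneg hc this]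

/-- The corner point satisfies every subset constraint: removing interferers outside `S` can only
increase the gains. -/
theorem prod_cornerGain_le (hc : 0 ≤ c) (S : Finset (Fin N)) :
    ∏ n ∈ S, cornerGain v c n ≤ (macCov v c S).det := by
  induction S using Finset.induction_on_max with
  | empty => simp [macCov]
  | insert a s ha ih =>
    have has : a ∉ s := fun h => lt_irrefl _ (ha a h)
    rw [Finset.prod_insert has, macCov_det_insert v hc has, mul_comm]
    refine mul_le_mul ih ?_ (by linarith [one_le_cornerGain v hc a])
      (macCov_posDef v hc s).det_pos.le
    unfold cornerGain
    have := macCov_inv_antitone v hc (S := s) (T := Finset.univ.filter (· < a))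
      (fun i hi => by simpa using ha i hi) (v a)
    gcongr

/-- For an initial segment `S` of the relays no interferer is removed, so the subset constraint is
tight. -/
theorem prod_cornerGain_eq (hc : 0 ≤ c) (S : Finset (Fin N))
    (hS : ∀ i ∈ S, ∀ j, j < i → j ∈ S) :
    ∏ n ∈ S, cornerGain v c n = (macCov v c S).det := by
  induction S using Finset.induction_on_max with
  | empty => simp [macCov]
  | insert a s ha ih =>
    have has : a ∉ s := fun h => lt_irrefl _ (ha a h)
    have hs : s = Finset.univ.filter (· < a) := by
      ext i
      simp only [Finset.mem_filter, Finset.mem_univ, true_and]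
      refine ⟨ha i, fun hi => ?_⟩
      exact (Finset.mem_insert.1 (hS a (Finset.mem_insert_self _ _) i hi)).resolve_left hi.ne
    rw [Finset.prod_insert has, macCov_det_insert v hc has, mul_comm, ih]
    · rw [cornerGain, ← hs]
    · intro i hi j hj
      rw [hs]
      simpa using hj.trans (ha i hi)

theorem gram_posDef {G : Matrix (Fin M) (Fin N) ℝ} (hG : LinearIndependent ℝ G.col) :
    (Gᵀ * G).PosDef := by
  simpa using Matrix.PosDef.conjTranspose_mul_self G (Matrix.mulVec_injective_iff.2 hG)

/-- The vector dual to `v n`: the pseudo-inverse `Vᵀ (V Vᵀ)⁻¹` applied to a basis vector, where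
`V` has rows `v m`. -/
theorem exists_dual (hv : LinearIndependent ℝ v) (n : Fin N) :
    ∃ y : Fin M → ℝ, ∀ m, v m ⬝ᵥ y = Pi.single (M := fun _ => ℝ) n 1 m := by
  have hK : ((Matrix.of v) * (Matrix.of v)ᵀ).PosDef := by
    simpa using gram_posDef (G := (Matrix.of v)ᵀ) hv
  refine ⟨(Matrix.of v)ᵀ *ᵥ (((Matrix.of v) * (Matrix.of v)ᵀ)⁻¹ *ᵥ Pi.single n 1), fun m => ?_⟩
  have h : (Matrix.of v) *ᵥ ((Matrix.of v)ᵀ *ᵥ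
      (((Matrix.of v) * (Matrix.of v)ᵀ)⁻¹ *ᵥ Pi.single n 1)) = Pi.single n 1 := by
    rw [Matrix.mulVec_mulVec, Matrix.mulVec_mulVec,
      Matrix.mul_nonsing_inv _ hK.det_pos.ne'.isUnit, Matrix.one_mulVec]
  exact congrFun h m

/-- Zero-forcing: projecting on a vector orthogonal to all interferers leaves a gain linear in `c`. -/
theorem exists_cornerGain_ge (hv : LinearIndependent ℝ v) (n : Fin N) :
    ∃ δ > 0, ∀ c : ℝ, 0 ≤ c → δ * c ≤ cornerGain v c n := by
  obtain ⟨y, hy⟩ := exists_dual v hv n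
  have hyn : v n ⬝ᵥ y = 1 := by simpa using hy n
  have hy0 : y ≠ 0 := by rintro rfl; simp at hyn
  have hyy : 0 < y ⬝ᵥ y := by simpa using Matrix.dotProduct_star_self_pos_iff.2 hy0
  refine ⟨(y ⬝ᵥ y)⁻¹, inv_pos.2 hyy, fun c hc => ?_⟩
  set A := macCov v c (Finset.univ.filter (· < n)) with hA
  -- `y` is orthogonal to every interferer, so it only sees the noise part of `A`
  have hAy : A *ᵥ y = y := by
    rw [hA, macCov, Matrix.add_mulVec, Matrix.one_mulVec, Matrix.smul_mulVec, Matrix.sum_mulVec,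
      Finset.sum_eq_zero, smul_zero, add_zero]
    intro i hi
    have hin : i ≠ n := (Finset.mem_filter.1 hi).2.ne
    rw [Matrix.vecMulVec_mulVec, hy i]
    simp [hin]
  -- the scaling `1 / ‖y‖²` maximizes the variational bound along the line spanned by `y`
  have h := two_mul_dotProduct_sub_le (macCov_posDef v hc (Finset.univ.filter (· < n)))
    (v n) ((y ⬝ᵥ y)⁻¹ • y)
  rw [← hA, Matrix.mulVec_smul, hAy, dotProduct_smul, dotProduct_smul, smul_dotProduct, hyn] at h
  simp only [smul_eq_mul, inv_mul_cancel₀ hyy.ne', mul_one] at h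
  have h2 : (y ⬝ᵥ y)⁻¹ ≤ v n ⬝ᵥ (A⁻¹ *ᵥ v n) := by linarith
  unfold cornerGain
  nlinarith [mul_le_mul_of_nonneg_left h2 hc]

end corner

/-! ### Capacity of a single link -/

section capacity
variable {N : ℕ} {σ2 x : ℝ}

theorem one_add_cov_posDef {m : ℕ} (hσ : 0 < σ2) (G : Matrix (Fin m) (Fin N) ℝ)
    {Q : Matrix (Fin N) (Fin N) ℝ} (hQ : Q.PosSemidef) :
    (1 + σ2⁻¹ • (G * Q * Gᵀ)).PosDef := by
  have h := hQ.mul_mul_conjTranspose_same G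
  rw [Matrix.conjTranspose_eq_transpose_of_trivial] at h
  exact Matrix.PosDef.one.add_posSemidef (h.smul (inv_nonneg.2 hσ.le))

theorem det_cov_comm {m : ℕ} (G : Matrix (Fin m) (Fin N) ℝ) (Q : Matrix (Fin N) (Fin N) ℝ) :
    (1 + σ2⁻¹ • (G * Q * Gᵀ)).det = (1 + (σ2⁻¹ • Q) * (Gᵀ * G)).det := by
  rw [Matrix.mul_assoc, ← Matrix.mul_smul, Matrix.det_one_add_mul_comm, smul_mul_assoc,
    Matrix.smul_mul, Matrix.mul_assoc]

theorem det_cov_le {m : ℕ} (hN : 1 ≤ N) (hσ : 0 < σ2) (G : Matrix (Fin m) (Fin N) ℝ)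
    (hG : (Gᵀ * G).PosDef) {Q : Matrix (Fin N) (Fin N) ℝ} (hQ : Q.PosSemidef)
    (hx : Q.trace ≤ N * (x * σ2)) :
    (1 + σ2⁻¹ • (G * Q * Gᵀ)).det
      ≤ (Gᵀ * G).det * ((Gᵀ * G)⁻¹.trace / N + x) ^ N := by
  rw [det_cov_comm]
  refine det_one_add_mul_le hN hG (hQ.smul (inv_nonneg.2 hσ.le)) ?_
  rw [Matrix.trace_smul, smul_eq_mul, inv_mul_le_iff₀ hσ]
  linarith

theorem le_det_cov {m : ℕ} (hσ : 0 < σ2) (hx : 0 < x) (G : Matrix (Fin m) (Fin N) ℝ)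
    (hG : (Gᵀ * G).PosDef) :
    (Gᵀ * G).det * x ^ N
      ≤ (1 + σ2⁻¹ • (G * ((x * σ2) • (1 : Matrix (Fin N) (Fin N) ℝ)) * Gᵀ)).det := by
  rw [det_cov_comm, smul_smul, mul_comm x, inv_mul_cancel_left₀ hσ.ne', smul_mul_assoc, one_mul]
  exact pow_mul_det_le hG hx

theorem logb_le_of_le_mul_pow {y D T : ℝ} (hy : 0 < y) (hD : 0 < D) (hT : 0 ≤ T) (hx : 0 < x)
    (h : y ≤ D * (T + x) ^ N) :
    Real.logb 2 y ≤ Real.logb 2 (D * x ^ N) + N * Real.logb 2 (1 + T / x) := by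
  have h1 : D * (T + x) ^ N = (D * x ^ N) * (1 + T / x) ^ N := by
    rw [mul_assoc, ← mul_pow]; congr 2; field_simp; ring
  have h2 : (0:ℝ) < 1 + T / x := by positivity
  calc Real.logb 2 y ≤ Real.logb 2 (D * (T + x) ^ N) :=
        Real.logb_le_logb_of_le one_lt_two hy h
    _ = _ := by rw [h1, Real.logb_mul (by positivity) (by positivity), Real.logb_pow]

/-- Restricting a covariance to the row space of `U` does not increase its trace: the difference is
the trace of the compression of `Q` by the projection `1 - Uᵀ U`. -/
theorem trace_conj_le {M : ℕ} {U : Matrix (Fin N) (Fin M) ℝ} (hU : U * Uᵀ = 1)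
    {Q : Matrix (Fin M) (Fin M) ℝ} (hQ : Q.PosSemidef) : (U * Q * Uᵀ).trace ≤ Q.trace := by
  have h := (hQ.mul_mul_conjTranspose_same (1 - Uᵀ * U)).trace_nonneg
  rw [Matrix.conjTranspose_eq_transpose_of_trivial, Matrix.transpose_sub, Matrix.transpose_mul,
    Matrix.transpose_transpose, Matrix.transpose_one, Matrix.trace_mul_cycle] at h
  have e : (1 - Uᵀ * U) * (1 - Uᵀ * U) = 1 - Uᵀ * U := by
    have : Uᵀ * U * (Uᵀ * U) = Uᵀ * U := by
      rw [Matrix.mul_assoc, ← Matrix.mul_assoc U, hU, Matrix.one_mul]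
    rw [sub_mul, one_mul, mul_sub, mul_one, this, sub_self, sub_zero]
  rw [e, sub_mul, one_mul, Matrix.trace_sub, ← Matrix.trace_mul_cycle] at h
  linarith

/-- The uplink of one user with power `N x σ²`: the cut-set term is at most, and for some covariance
at least, `log₂ (∏ₙ r(n,n)² · x^N)` up to a vanishing excess, and the sum of the per-stream lattice
rates obeys the same upper bound. -/
theorem uplink_bounds {M : ℕ} (hN : 1 ≤ N) (hσ : 0 < σ2)
    {H : Matrix (Fin N) (Fin M) ℝ} {R : Matrix (Fin N) (Fin N) ℝ} {U : Matrix (Fin N) (Fin M) ℝ}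
    (hH : H = R * U) (hRtri : R.BlockTriangular id) (hRdiag : ∀ n, R n n ≠ 0)
    (hU : U * Uᵀ = 1) :
    ∃ T : ℝ, 0 ≤ T ∧ ∀ x : ℝ, 0 < x →
      (∀ Q : Matrix (Fin M) (Fin M) ℝ, Q.PosSemidef → Q.trace ≤ N * (x * σ2) →
        Real.logb 2 (1 + σ2⁻¹ • (H * Q * Hᵀ)).det
          ≤ Real.logb 2 ((∏ n, R n n ^ 2) * x ^ N) + N * Real.logb 2 (1 + T / x)) ∧
      (∃ Q : Matrix (Fin M) (Fin M) ℝ, Q.PosSemidef ∧ Q.trace ≤ N * (x * σ2) ∧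
        Real.logb 2 ((∏ n, R n n ^ 2) * x ^ N)
          ≤ Real.logb 2 (1 + σ2⁻¹ • (H * Q * Hᵀ)).det) ∧
      (∀ p : Fin N → ℝ, (∀ n, 0 < p n) → ∑ n, p n ≤ N * (x * σ2) →
        ∑ n, max 0 (Real.logb 2 (R n n ^ 2 * p n / σ2))
          ≤ Real.logb 2 ((∏ n, R n n ^ 2) * x ^ N) + N * Real.logb 2 (1 + T / x)) := by
  have hdetR : R.det = ∏ n, R n n := Matrix.det_of_isUpperTriangular hRtri
  have hD : 0 < ∏ n, R n n ^ 2 := Finset.prod_pos fun n _ => by have := hRdiag n; positivity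
  have hRu : IsUnit R := by
    rw [Matrix.isUnit_iff_isUnit_det, hdetR]
    exact (Finset.prod_ne_zero_iff.2 fun n _ => hRdiag n).isUnit
  have hK : (Rᵀ * R).PosDef := by
    simpa using Matrix.PosDef.conjTranspose_mul_self R (Matrix.mulVec_injective_iff_isUnit.2 hRu)
  have hKdet : (Rᵀ * R).det = ∏ n, R n n ^ 2 := by
    rw [Matrix.det_mul, Matrix.det_transpose, hdetR, ← sq, Finset.prod_pow]
  -- the lattice streams form a diagonal channel with the same determinant as `Rᵀ R`
  set K' : Matrix (Fin N) (Fin N) ℝ := Matrix.diagonal fun n => R n n ^ 2 with hK'def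
  have hK' : K'.PosDef := Matrix.PosDef.diagonal fun n => by have := hRdiag n; positivity
  have hK'det : K'.det = ∏ n, R n n ^ 2 := Matrix.det_diagonal
  have t1 : 0 ≤ (Rᵀ * R)⁻¹.trace / N := div_nonneg hK.inv.posSemidef.trace_nonneg N.cast_nonneg
  have t2 : 0 ≤ K'⁻¹.trace / N := div_nonneg hK'.inv.posSemidef.trace_nonneg N.cast_nonneg
  have hHQ : ∀ Q : Matrix (Fin M) (Fin M) ℝ, H * Q * Hᵀ = R * (U * Q * Uᵀ) * Rᵀ := by
    intro Q
    rw [hH, Matrix.transpose_mul]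
    simp only [Matrix.mul_assoc]
  -- the sum of the two offsets serves both upper bounds
  refine ⟨(Rᵀ * R)⁻¹.trace / N + K'⁻¹.trace / N, by positivity, fun x hx => ⟨?_, ?_, ?_⟩⟩
  · intro Q hQ hQt
    have hQ' : (U * Q * Uᵀ).PosSemidef := by simpa using hQ.mul_mul_conjTranspose_same U
    rw [hHQ]
    refine logb_le_of_le_mul_pow (one_add_cov_posDef hσ R hQ').det_pos hD (by positivity) hx ?_
    refine (det_cov_le hN hσ R hK hQ' ((trace_conj_le hU hQ).trans hQt)).trans ?_
    rw [hKdet]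
    gcongr
    linarith
  · have hQ : (Uᵀ * U).PosSemidef := by simpa using Matrix.posSemidef_conjTranspose_mul_self U
    refine ⟨(x * σ2) • (Uᵀ * U), hQ.smul (by positivity), ?_, ?_⟩
    · rw [Matrix.trace_smul, Matrix.trace_mul_comm, hU, Matrix.trace_one, Fintype.card_fin,
        smul_eq_mul, mul_comm]
    · have e : U * ((x * σ2) • (Uᵀ * U)) * Uᵀ = (x * σ2) • 1 := by
        rw [Matrix.mul_smul, Matrix.smul_mul, ← Matrix.mul_assoc, hU, Matrix.one_mul, hU]
      rw [hHQ, e, ← hKdet]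
      exact Real.logb_le_logb_of_le one_lt_two (mul_pos hK.det_pos (by positivity))
        (le_det_cov hσ hx R hK)
  · intro p hp hpt
    have hpos : ∀ n, 0 < R n n ^ 2 * p n / σ2 := fun n => by
      have := hRdiag n; have := hp n; positivity
    have hX : (Matrix.diagonal fun n => p n / σ2).PosSemidef :=
      Matrix.PosSemidef.diagonal fun n => (div_pos (hp n) hσ).le
    have hXt : (Matrix.diagonal fun n => p n / σ2).trace ≤ N * x := by
      rw [Matrix.trace_diagonal, ← Finset.sum_div, div_le_iff₀ hσ]
      linarith
    have e : (1 + (Matrix.diagonal fun n => p n / σ2) * K').det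
        = ∏ n, (1 + R n n ^ 2 * p n / σ2) := by
      rw [hK'def, Matrix.diagonal_mul_diagonal, ← Matrix.diagonal_one, Matrix.diagonal_add,
        Matrix.det_diagonal]
      refine Finset.prod_congr rfl fun n _ => ?_
      ring
    have hb := det_one_add_mul_le hN hK' hX hXt
    rw [e, hK'det] at hb
    -- `max 0 (log₂ t) ≤ log₂ (1 + t)` turns the rate sum into the logarithm of a determinant
    refine le_trans ?_ (logb_le_of_le_mul_pow (T := (Rᵀ * R)⁻¹.trace / N + K'⁻¹.trace / N)
      (Finset.prod_pos fun n _ => by linarith [hpos n]) hD (by positivity) hx (hb.trans ?_))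
    · rw [Real.logb_prod _ _ fun n _ => by linarith [hpos n]]
      refine Finset.sum_le_sum fun n _ => max_le ?_ ?_
      · exact Real.logb_nonneg one_lt_two (by linarith [hpos n])
      · exact Real.logb_le_logb_of_le one_lt_two (hpos n) (by linarith)
    · gcongr
      linarith

/-- The downlink to user `k` with total relay power `N x σ²`: the cut-set term is
`log₂ (E x^N)` up to a vanishing excess, the isotropic covariance reaches this value, and it
produces the covariance of the multiple-access constraint for the full set of relays. -/
theorem downlink_bounds {M : ℕ} (hN : 1 ≤ N) (hσ : 0 < σ2)
    {g : Fin N → Fin 2 → Fin M → ℝ} {k : Fin 2} (hg : LinearIndependent ℝ (fun n => g n k)) :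
    ∃ E T : ℝ, 0 < E ∧ 0 ≤ T ∧ ∀ x : ℝ, 0 < x →
      (∀ Q : Matrix (Fin N) (Fin N) ℝ, Q.PosSemidef → Q.trace ≤ N * (x * σ2) →
        Real.logb 2 (1 + σ2⁻¹ • (Gmat2 g k * Q * (Gmat2 g k)ᵀ)).det
          ≤ Real.logb 2 (E * x ^ N) + N * Real.logb 2 (1 + T / x)) ∧
      Real.logb 2 (E * x ^ N) ≤
        Real.logb 2 (1 + σ2⁻¹ • (Gmat2 g k * ((x * σ2) • (1 : Matrix (Fin N) (Fin N) ℝ)) * (Gmat2 g k)ᵀ)).det ∧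
      macCov (fun n => g n k) x Finset.univ
        = 1 + σ2⁻¹ • (Gmat2 g k * ((x * σ2) • (1 : Matrix (Fin N) (Fin N) ℝ)) * (Gmat2 g k)ᵀ) := by
  have hK : ((Gmat2 g k)ᵀ * Gmat2 g k).PosDef := gram_posDef hg
  have t1 := div_nonneg hK.inv.posSemidef.trace_nonneg (N.cast_nonneg (α := ℝ))
  refine ⟨_, _, hK.det_pos, t1, fun x hx => ⟨?_, ?_, ?_⟩⟩
  · intro Q hQ hQt
    exact logb_le_of_le_mul_pow (one_add_cov_posDef hσ _ hQ).det_pos hK.det_pos t1 hx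
      (det_cov_le hN hσ _ hK hQ hQt)
  · exact Real.logb_le_logb_of_le one_lt_two (mul_pos hK.det_pos (by positivity))
        (le_det_cov hσ hx _ hK)
  · rw [macCov, Matrix.mul_smul, Matrix.smul_mul, smul_smul, mul_comm x,
      inv_mul_cancel_left₀ hσ.ne', Matrix.mul_one]
    congr 2
    ext i j
    simp [Matrix.sum_apply, Matrix.mul_apply, Gmat2, Matrix.vecMulVec_apply]

end capacity

/-! ### High-SNR asymptotics -/

section asymptotics

theorem eventually_mul_logb_le {A B C D : ℝ} (hAB : A < B) (hC : 0 < C) (hD : 0 < D) :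
    ∀ᶠ P : ℝ in atTop, A * Real.logb 2 (C * P) ≤ B * Real.logb 2 (D * P) := by
  have h : Tendsto (fun P : ℝ => (B - A) * Real.logb 2 P) atTop atTop :=
    (Real.tendsto_logb_atTop one_lt_two).const_mul_atTop (sub_pos.2 hAB)
  filter_upwards [h.eventually_ge_atTop (A * Real.logb 2 C - B * Real.logb 2 D),
    eventually_gt_atTop 0] with P hP hP0
  rw [Real.logb_mul hC.ne' hP0.ne', Real.logb_mul hD.ne' hP0.ne']
  linarith

theorem tendsto_logb_one_add_div {T b : ℝ} (hb : 0 < b) :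
    Tendsto (fun P : ℝ => Real.logb 2 (1 + T / (b * P))) atTop (nhds 0) := by
  have h1 : Tendsto (fun P : ℝ => 1 + T / (b * P)) atTop (nhds (1 + 0)) :=
    tendsto_const_nhds.add (tendsto_const_nhds.div_atTop (tendsto_id.const_mul_atTop hb))
  rw [add_zero] at h1
  have h2 := h1.log one_ne_zero
  rw [Real.log_one] at h2
  simpa [Real.logb] using h2.div_const (Real.log 2)

/-- One flow of the distributive scheme: for large `P` some rate vector meets all the uplink
constraints (with gains `ρ` and uniform power) and all the downlink subset constraints, and its sum
is at least the smaller of the two high-SNR capacities. For `α < 1/2` it consists of the uplink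
rates, for `α > 1/2` of the corner rates. -/
theorem flow_achievable {N M : ℕ} {v : Fin N → Fin M → ℝ} (hv : LinearIndependent ℝ v)
    {ρ : Fin N → ℝ} (hρ : ∀ n, ρ n ≠ 0) {a b α E : ℝ} (ha : 0 < a) (hb : 0 < b)
    (hE : ∀ x : ℝ, 0 < x → Real.logb 2 (E * x ^ N)
      ≤ Real.logb 2 (macCov v x Finset.univ).det)
    (hα : α ∈ Set.Ioo (0:ℝ) (1/2) ∪ Set.Ioo (1/2 : ℝ) 1) :
    ∀ᶠ P : ℝ in atTop, ∃ r : Fin N → ℝ,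
      (∀ n, r n ≤ α / 2 * Real.logb 2 (ρ n ^ 2 * (a * P))) ∧
      (∀ S : Finset (Fin N), ∑ n ∈ S, r n
        ≤ (1 - α) / 2 * Real.logb 2 (macCov v (b * P) S).det) ∧
      min (α / 2 * Real.logb 2 ((∏ n, ρ n ^ 2) * (a * P) ^ N))
        ((1 - α) / 2 * Real.logb 2 (E * (b * P) ^ N)) ≤ ∑ n, r n := by
  have hα1 : 0 < (1 - α) / 2 := by rcases hα with h | h <;> linarith [h.1, h.2]
  have hρ2 : ∀ n, 0 < ρ n ^ 2 := fun n => by have := hρ n; positivity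
  have hcmp : (∀ᶠ P : ℝ in atTop, ∀ n, α / 2 * Real.logb 2 (ρ n ^ 2 * (a * P))
        ≤ (1 - α) / 2 * Real.logb 2 (cornerGain v (b * P) n)) ∨
      (∀ᶠ P : ℝ in atTop, ∀ n, (1 - α) / 2 * Real.logb 2 (cornerGain v (b * P) n)
        ≤ α / 2 * Real.logb 2 (ρ n ^ 2 * (a * P))) := by
    rcases hα with h | h
    · left
      rw [eventually_all]
      intro n
      obtain ⟨δ, hδ, hδg⟩ := exists_cornerGain_ge v hv n
      filter_upwards [eventually_mul_logb_le (A := α / 2) (B := (1 - α) / 2)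
        (C := ρ n ^ 2 * a) (D := δ * b) (by linarith [h.2]) (mul_pos (hρ2 n) ha) (by positivity),
        eventually_gt_atTop 0] with P hP hP0
      rw [mul_assoc, mul_assoc] at hP
      refine hP.trans (mul_le_mul_of_nonneg_left ?_ hα1.le)
      exact Real.logb_le_logb_of_le one_lt_two (by positivity) (hδg _ (by positivity))
    · right
      rw [eventually_all]
      intro n
      have hvv : 0 ≤ v n ⬝ᵥ v n := by simpa using dotProduct_star_self_nonneg (v n)
      filter_upwards [eventually_mul_logb_le (A := (1 - α) / 2) (B := α / 2)
        (C := (1 + v n ⬝ᵥ v n) * b) (D := ρ n ^ 2 * a) (by linarith [h.1]) (by positivity)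
        (mul_pos (hρ2 n) ha), eventually_gt_atTop 0, eventually_ge_atTop b⁻¹] with P hP hP0 hPb
      rw [mul_assoc, mul_assoc (ρ n ^ 2)] at hP
      refine le_trans (mul_le_mul_of_nonneg_left ?_ hα1.le) hP
      have hbP : 0 ≤ b * P := by positivity
      have hbP1 : 1 ≤ b * P := by rwa [inv_le_iff_one_le_mul₀' hb] at hPb
      refine Real.logb_le_logb_of_le one_lt_two (by linarith [one_le_cornerGain v hbP n]) ?_
      have := macCov_inv_antitone v hbP (S := ∅) (T := Finset.univ.filter (· < n)) (by simp) (v n)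
      simp only [macCov, Finset.sum_empty, smul_zero, add_zero, inv_one, Matrix.one_mulVec] at this
      unfold cornerGain macCov
      nlinarith [mul_le_mul_of_nonneg_left this hbP]
  have hu : ∀ P : ℝ, 0 < P → ∑ n, α / 2 * Real.logb 2 (ρ n ^ 2 * (a * P))
      = α / 2 * Real.logb 2 ((∏ n, ρ n ^ 2) * (a * P) ^ N) := by
    intro P hP
    rw [← Finset.mul_sum, ← Real.logb_prod _ _ fun n _ => (mul_pos (hρ2 n) (by positivity)).ne',
      Finset.prod_mul_distrib, Finset.prod_const, Finset.card_univ, Fintype.card_fin]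
  have hd : ∀ P : ℝ, 0 < P → ∀ S : Finset (Fin N),
      ∑ n ∈ S, (1 - α) / 2 * Real.logb 2 (cornerGain v (b * P) n)
        = (1 - α) / 2 * Real.logb 2 (∏ n ∈ S, cornerGain v (b * P) n) := by
    intro P hP S
    have hbP : 0 ≤ b * P := by positivity
    rw [← Finset.mul_sum, Real.logb_prod _ _ fun n _ => by linarith [one_le_cornerGain v hbP n]]
  have hmac : ∀ P : ℝ, 0 < P → ∀ S : Finset (Fin N),
      ∑ n ∈ S, (1 - α) / 2 * Real.logb 2 (cornerGain v (b * P) n)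
        ≤ (1 - α) / 2 * Real.logb 2 (macCov v (b * P) S).det := by
    intro P hP S
    have hbP : 0 ≤ b * P := by positivity
    rw [hd P hP S]
    refine mul_le_mul_of_nonneg_left (Real.logb_le_logb_of_le one_lt_two
      (Finset.prod_pos fun n _ => by linarith [one_le_cornerGain v hbP n])
      (prod_cornerGain_le v hbP S)) hα1.le
  rcases hcmp with hc | hc
  · filter_upwards [hc, eventually_gt_atTop 0] with P hP hP0
    refine ⟨fun n => α / 2 * Real.logb 2 (ρ n ^ 2 * (a * P)), fun n => le_rfl, fun S => ?_, ?_⟩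
    · exact (Finset.sum_le_sum fun n _ => hP n).trans (hmac P hP0 S)
    · rw [hu P hP0]
      exact min_le_left _ _
  · filter_upwards [hc, eventually_gt_atTop 0] with P hP hP0
    refine ⟨fun n => (1 - α) / 2 * Real.logb 2 (cornerGain v (b * P) n), hP, hmac P hP0, ?_⟩
    rw [hd P hP0, prod_cornerGain_eq v (by positivity) _ (by simp)]
    exact (min_le_right _ _).trans
      (mul_le_mul_of_nonneg_left (hE _ (by positivity)) hα1.le)

end asymptotics

/-! ### Squeezing the two suprema -/

theorem min_le_min_add {x y u d e f : ℝ} (hx : x ≤ u + e) (hy : y ≤ d + f) (he : 0 ≤ e)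
    (hf : 0 ≤ f) : min x y ≤ min u d + (e + f) := by
  rw [← min_add_add_right]
  exact le_min ((min_le_left _ _).trans (by linarith)) ((min_le_right _ _).trans (by linarith))

theorem abs_csSup_sub_csSup_le {A B : Set ℝ} {F e : ℝ}
    (hA : ∀ s ∈ A, s ≤ F + e) (hA' : ∃ s ∈ A, F ≤ s)
    (hB : ∀ s ∈ B, s ≤ F + e) (hB' : ∃ s ∈ B, F ≤ s) : |sSup A - sSup B| ≤ e := by
  obtain ⟨s, hs, hFs⟩ := hA'
  obtain ⟨t, ht, hFt⟩ := hB'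
  have h1 := hFs.trans (le_csSup ⟨F + e, hA⟩ hs)
  have h2 := hFt.trans (le_csSup ⟨F + e, hB⟩ ht)
  have h3 := csSup_le ⟨s, hs⟩ hA
  have h4 := csSup_le ⟨t, ht⟩ hB
  rw [abs_le]
  constructor <;> linarith

/-- with `K = 2` users and any `α ∈ (0,1/2) ∪ (1/2,1)`, the difference
`C_cut(P) − R_dist(P)` tends to `0` as `P → ∞`: the proposed distributive lattice-coding
scheme asymptotically achieves the cut-set sum-rate upper bound at high SNR. -/
theorem ccut_sub_rdist_tendsto_zero_two_users
    {N M : ℕ} (hN : 1 ≤ N) (hM : N ≤ M)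
    (H : Fin 2 → Matrix (Fin N) (Fin M) ℝ)
    (R : Fin 2 → Matrix (Fin N) (Fin N) ℝ) (U : Fin 2 → Matrix (Fin N) (Fin M) ℝ)
    (hH : ∀ k, H k = R k * U k)
    (hRtri : ∀ k, (R k).BlockTriangular id)
    (hRdiag : ∀ k n, R k n n ≠ 0)
    (hU : ∀ k, U k * (U k)ᵀ = 1)
    (g : Fin N → Fin 2 → Fin M → ℝ)
    (hg : ∀ k, LinearIndependent ℝ (fun n => g n k))
    (β : Fin 2 → ℝ) (hβ : ∀ k, 0 < β k)
    (βR σ2 : ℝ) (hβR : 0 < βR) (hσ : 0 < σ2)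
    (α : ℝ) (hα : α ∈ Set.Ioo (0:ℝ) (1/2) ∪ Set.Ioo (1/2 : ℝ) 1) :
    Tendsto (fun P : ℝ => CcutTwo H g β βR σ2 α P - RdistTwo R g β βR σ2 α P)
      atTop (nhds 0) := by
  have hα0 : 0 < α / 2 := by rcases hα with h | h <;> linarith [h.1, h.2]
  have hα1 : 0 < (1 - α) / 2 := by rcases hα with h | h <;> linarith [h.1, h.2]
  have hN0 : (0 : ℝ) < N := by exact_mod_cast hN
  choose TU hTU hUp using fun k => uplink_bounds hN hσ (hH k) (hRtri k) (hRdiag k) (hU k)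
  choose E TD hE hTD hDown using fun k => downlink_bounds (k := k) hN hσ (hg k)
  set a : Fin 2 → ℝ := fun k => β k / (N * σ2) with ha_def
  set b : ℝ := βR / σ2 with hb_def
  have ha : ∀ k, 0 < a k := fun k => div_pos (hβ k) (by positivity)
  have hb : 0 < b := by positivity
  have haP : ∀ k P, N * (a k * P * σ2) = β k * P := fun k P => by
    simp only [ha_def]; field_simp
  have hbP : ∀ P, b * P * σ2 = βR * P := fun P => by
    simp only [hb_def]; field_simp
  set u : Fin 2 → ℝ → ℝ := fun k P =>
    α / 2 * Real.logb 2 ((∏ n, R k n n ^ 2) * (a k * P) ^ N) with hu_def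
  set d : Fin 2 → ℝ → ℝ := fun k P =>
    (1 - α) / 2 * Real.logb 2 (E k * (b * P) ^ N) with hd_def
  -- `eu` and `ed` are the vanishing excesses over `u` and `d` in the upper bounds
  set eu : Fin 2 → ℝ → ℝ := fun k P =>
    α / 2 * (N * Real.logb 2 (1 + TU k / (a k * P))) with heu_def
  set ed : Fin 2 → ℝ → ℝ := fun k P =>
    (1 - α) / 2 * (N * Real.logb 2 (1 + TD k / (b * P))) with hed_def
  have heu0 : ∀ k P, 0 < P → 0 ≤ eu k P := fun k P hP => by
    have : 0 ≤ TU k / (a k * P) := div_nonneg (hTU k) (mul_pos (ha k) hP).le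
    exact mul_nonneg hα0.le (mul_nonneg hN0.le (Real.logb_nonneg one_lt_two (by linarith)))
  have hed0 : ∀ k P, 0 < P → 0 ≤ ed k P := fun k P hP => by
    have : 0 ≤ TD k / (b * P) := div_nonneg (hTD k) (mul_pos hb hP).le
    exact mul_nonneg hα1.le (mul_nonneg hN0.le (Real.logb_nonneg one_lt_two (by linarith)))
  have hlim : Tendsto (fun P => (eu 1 P + ed 0 P) + (eu 0 P + ed 1 P)) atTop (nhds 0) := by
    have h1 : ∀ k, Tendsto (eu k) atTop (nhds 0) := fun k => by
      simpa using ((tendsto_logb_one_add_div (T := TU k) (ha k)).const_mul (N : ℝ)).const_mul (α / 2)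
    have h2 : ∀ k, Tendsto (ed k) atTop (nhds 0) := fun k => by
      simpa using ((tendsto_logb_one_add_div (T := TD k) hb).const_mul (N : ℝ)).const_mul
        ((1 - α) / 2)
    simpa using ((h1 1).add (h2 0)).add ((h1 0).add (h2 1))
  have hflow : ∀ k k', ∀ᶠ P : ℝ in atTop, ∃ r : Fin N → ℝ,
      (∀ n, r n ≤ α / 2 * Real.logb 2 (R k' n n ^ 2 * (a k' * P))) ∧
      (∀ S : Finset (Fin N), ∑ n ∈ S, r n
        ≤ (1 - α) / 2 * Real.logb 2 (macCov (fun n => g n k) (b * P) S).det) ∧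
      min (u k' P) (d k P) ≤ ∑ n, r n := fun k k' =>
    flow_achievable (hg k) (hRdiag k') (ha k') hb
      (fun x hx => by rw [(hDown k x hx).2.2]; exact (hDown k x hx).2.1) hα
  refine squeeze_zero_norm' ?_ hlim
  filter_upwards [eventually_gt_atTop 0, hflow 0 1, hflow 1 0] with P hP hr1 hr0
  have haP0 : ∀ k, 0 < a k * P := fun k => mul_pos (ha k) hP
  have hbP0 : 0 < b * P := mul_pos hb hP
  rw [Real.norm_eq_abs]
  refine abs_csSup_sub_csSup_le (F := min (u 1 P) (d 0 P) + min (u 0 P) (d 1 P)) ?_ ?_ ?_ ?_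
  · rintro s ⟨Q, QR, hQ, hQR, hQRt, rfl⟩
    have h1 : ∀ k, α / 2 * Real.logb 2 (1 + σ2⁻¹ • (H k * Q k * (H k)ᵀ)).det
        ≤ u k P + eu k P := fun k => by
      have := (hUp k _ (haP0 k)).1 (Q k) (hQ k).1 (by rw [haP]; exact (hQ k).2)
      simp only [hu_def, heu_def]
      rw [← mul_add]
      exact mul_le_mul_of_nonneg_left this hα0.le
    have h2 : ∀ k, (1 - α) / 2 * Real.logb 2
        (1 + σ2⁻¹ • (Gmat2 g k * QR * (Gmat2 g k)ᵀ)).det ≤ d k P + ed k P := fun k => by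
      have := (hDown k _ hbP0).1 QR hQR (by rw [hbP, ← mul_assoc]; exact hQRt)
      simp only [hd_def, hed_def]
      rw [← mul_add]
      exact mul_le_mul_of_nonneg_left this hα1.le
    have := min_le_min_add (h1 1) (h2 0) (heu0 _ _ hP) (hed0 _ _ hP)
    have := min_le_min_add (h1 0) (h2 1) (heu0 _ _ hP) (hed0 _ _ hP)
    linarith
  -- isotropic relay covariance together with covariances isotropic on the row spaces of `U k`
  · choose Q hQ hQt hQl using fun k => (hUp k _ (haP0 k)).2.1
    refine ⟨_, ⟨Q, (b * P * σ2) • 1, fun k => ⟨hQ k, by rw [← haP]; exact hQt k⟩,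
      Matrix.PosSemidef.one.smul (by positivity), ?_, rfl⟩, ?_⟩
    · rw [Matrix.trace_smul, Matrix.trace_one, Fintype.card_fin, hbP, smul_eq_mul]
      linarith
    · exact add_le_add
        (min_le_min (mul_le_mul_of_nonneg_left (hQl 1) hα0.le)
          (mul_le_mul_of_nonneg_left (hDown 0 _ hbP0).2.1 hα1.le))
        (min_le_min (mul_le_mul_of_nonneg_left (hQl 0) hα0.le)
          (mul_le_mul_of_nonneg_left (hDown 1 _ hbP0).2.1 hα1.le))
  · rintro s ⟨r, p, hp, hr, hmac, hpt, rfl⟩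
    have h1 : ∀ k, ∑ n, r k n ≤ u k P + eu k P := fun k => by
      have := (hUp k _ (haP0 k)).2.2 (p k) (hp k) (by rw [haP]; exact hpt k)
      simp only [hu_def, heu_def]
      rw [← mul_add]
      refine le_trans ?_ (mul_le_mul_of_nonneg_left this hα0.le)
      rw [Finset.mul_sum]
      refine Finset.sum_le_sum fun n _ => (hr k n).trans_eq ?_
      rw [mul_max_of_nonneg _ _ hα0.le, mul_zero]
    have h2 : ∀ k k', k' ≠ k → ∑ n, r k' n ≤ d k P + ed k P := fun k k' hkk => by
      have hm := hmac k k' hkk Finset.univ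
      have e : βR * P / σ2 = b * P := by simp only [hb_def]; ring
      rw [e] at hm
      have h3 := (hDown k _ hbP0).1 ((b * P * σ2) • 1) (Matrix.PosSemidef.one.smul (by positivity))
        (by rw [Matrix.trace_smul, Matrix.trace_one, Fintype.card_fin, smul_eq_mul, mul_comm])
      rw [← (hDown k _ hbP0).2.2] at h3
      simp only [hd_def, hed_def]
      rw [← mul_add]
      exact hm.trans (mul_le_mul_of_nonneg_left h3 hα1.le)
    have h3 := min_le_min_add (h1 1) (h2 0 1 (by decide)) (heu0 _ _ hP) (hed0 _ _ hP)
    have h4 := min_le_min_add (h1 0) (h2 1 0 (by decide)) (heu0 _ _ hP) (hed0 _ _ hP)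
    rw [min_self] at h3 h4
    rw [Fin.sum_univ_two]
    linarith
  -- uniform powers `β k * P / N` and the rates of the two flows
  · obtain ⟨r1, hr1u, hr1d, hr1s⟩ := hr1
    obtain ⟨r0, hr0u, hr0d, hr0s⟩ := hr0
    have e : βR * P / σ2 = b * P := by simp only [hb_def]; ring
    refine ⟨_, ⟨![r0, r1], fun k _ => a k * P * σ2, fun k n => mul_pos (haP0 k) hσ, ?_, ?_, ?_,
      rfl⟩, ?_⟩
    · have e2 : ∀ k n, R k n n ^ 2 * (a k * P * σ2) / σ2 = R k n n ^ 2 * (a k * P) := fun k n => by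
        field_simp
      intro k n
      rw [e2]
      refine le_max_of_le_right ?_
      fin_cases k
      · exact hr0u n
      · exact hr1u n
    · intro k k' hkk S
      rw [e]
      fin_cases k <;> fin_cases k'
      · exact absurd rfl hkk
      · exact hr1d S
      · exact hr0d S
      · exact absurd rfl hkk
    · intro k
      rw [Finset.sum_const, Finset.card_univ, Fintype.card_fin, nsmul_eq_mul, haP]
    · rw [Fin.sum_univ_two, add_comm]
      exact add_le_add hr0s hr1s
end

section
/- Under the stated hypotheses with α ∈ (0,1/2), for each user k, limsup_{P→∞} ( B_k(P) − A_k(P) ) ≤ α·N·(K−2)/(2(K−1)) + (α/(2(K−1)))·Σ_{k'≠k} Σ_{n=1}^N log₂( t_k(n,n)² / r_{k'}(n,n)² ); that is, the asymptotic gap between the cooperative-uplink cut-set bound and the equal-power lattice-coding achievable uplink sum-rate for user k is bounded by an explicit constant independent of the power level P. -/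
open Matrix Filter

/-!
Write the concatenated channel as `T Ut`. For any admissible inputs the received covariance is
`1 + σ⁻² T S Tᵀ = T (G + σ⁻² S) Tᵀ`, where `G = T⁻¹ T⁻ᵀ` and `S` is the block-diagonal input
covariance compressed by `Ut` (`det_received`). Since the rows of `Ut` are orthonormal, compression
does not increase the trace (`compCov_trace_le`), so `tr S ≤ (K - 1) β P`. The linearised AM-GM
inequality (`log_det_le_trace`), tangent at `s = (K - 1) β P / (N σ²)`, gives
`log det (G + σ⁻² S) ≤ N log s + tr G / s`. Hence, with logarithms now to base `2`,
`B_k(P) ≤ (α/2) log det T² + (N α/2) log s + O(1/s)`; the term in `log s` is the one in `A_k(P)`,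
and `log det T² = ∑ₙ log t(n,n)²` because `T` is triangular. This upper
bound on `B_k(P) - A_k(P)` converges exactly to the claimed constant.

The isotropic inputs `(β P / M) • 1` give `S` proportional to the identity, hence a lower bound on
the difference that is uniform for large `P` (`eventually_half_pow_le_det`); it ensures that the
real-valued `limsup` is a genuine one.
-/

/-! ### Determinant and trace bounds -/

/-- Tangent-line form of the AM-GM bound `det X ≤ (tr X / N) ^ N`. Keeping the point of tangency
`a` free makes the bound affine in the trace. -/
lemma log_det_le_trace {N : ℕ} {X : Matrix (Fin N) (Fin N) ℝ} (hX : X.PosDef) {a : ℝ}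
    (ha : 0 < a) : Real.log X.det ≤ X.trace / a - N + N * Real.log a := by
  have hpos := hX.eigenvalues_pos
  have hdet : X.det = ∏ i, hX.isHermitian.eigenvalues i := by
    simpa using hX.isHermitian.det_eq_prod_eigenvalues
  have htr : X.trace = ∑ i, hX.isHermitian.eigenvalues i := by
    simpa using hX.isHermitian.trace_eq_sum_eigenvalues
  rw [hdet, htr, Real.log_prod (fun i _ => (hpos i).ne'), Finset.sum_div]
  have h : ∀ i, Real.log (hX.isHermitian.eigenvalues i)
      ≤ hX.isHermitian.eigenvalues i / a - 1 + Real.log a := by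
    intro i
    have h1 := Real.log_le_sub_one_of_pos (div_pos (hpos i) ha)
    rw [Real.log_div (hpos i).ne' ha.ne'] at h1
    linarith
  calc _ ≤ ∑ i, (hX.isHermitian.eigenvalues i / a - 1 + Real.log a) :=
        Finset.sum_le_sum fun i _ => h i
    _ = _ := by simp [Finset.sum_add_distrib, Finset.sum_sub_distrib]

/-- Compressing a positive semidefinite matrix by a matrix with orthonormal rows does not increase
the trace: `1 - Vᵀ V` is an orthogonal projection. -/
lemma trace_compress_le {N : ℕ} {ι : Type*} [Fintype ι] [DecidableEq ι]
    {V : Matrix (Fin N) ι ℝ} (hV : V * Vᵀ = 1) {D : Matrix ι ι ℝ} (hD : D.PosSemidef) :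
    (V * D * Vᵀ).trace ≤ D.trace := by
  have hproj : (1 - Vᵀ * V) * (1 - Vᵀ * V) = 1 - Vᵀ * V := by
    have : Vᵀ * V * (Vᵀ * V) = Vᵀ * V := by
      rw [Matrix.mul_assoc, ← Matrix.mul_assoc V, hV, Matrix.one_mul]
    simp [sub_mul, mul_sub, this]
  have hps := (hD.mul_mul_conjTranspose_same (1 - Vᵀ * V)).trace_nonneg
  have ht : (1 - Vᵀ * V)ᴴ = 1 - Vᵀ * V := by
    simp [Matrix.conjTranspose_eq_transpose_of_trivial]
  rw [ht, Matrix.trace_mul_comm, ← Matrix.mul_assoc, hproj, Matrix.sub_mul, Matrix.one_mul,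
    Matrix.trace_sub] at hps
  have : (V * D * Vᵀ).trace = (Vᵀ * V * D).trace := by
    rw [Matrix.trace_mul_comm, Matrix.mul_assoc]
  have h2 : (Vᵀ * (V * D)).trace = (Vᵀ * V * D).trace := by rw [Matrix.mul_assoc]
  linarith

/-! ### Block-diagonal input covariances -/

/-- The `0`-`1` matrix selecting the coordinates of user `j` from the concatenation. -/
def blockSel {J : Type*} [DecidableEq J] (M : ℕ) (j : J) : Matrix (Fin M) (J × Fin M) ℝ :=
  Matrix.of fun m p => if p = (j, m) then 1 else 0

lemma mul_blockSel_transpose {J : Type*} [Fintype J] [DecidableEq J] {N M : ℕ}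
    (A : Matrix (Fin N) (J × Fin M) ℝ) (j : J) :
    A * (blockSel M j)ᵀ = Matrix.of fun i m => A i (j, m) := by
  ext i m
  simp [blockSel, Matrix.mul_apply]

lemma blockSel_mul_transpose {J : Type*} [Fintype J] [DecidableEq J] {M : ℕ} (j : J) :
    blockSel M j * (blockSel M j)ᵀ = 1 := by
  rw [mul_blockSel_transpose]
  ext i m
  simp [blockSel, Matrix.one_apply, eq_comm]

/-- The coordinate selections of all the users resolve the identity. -/
lemma sum_blockSel {J : Type*} [Fintype J] [DecidableEq J] {M : ℕ} :
    ∑ j : J, (blockSel M j)ᵀ * blockSel M j = 1 := by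
  ext ⟨a, i⟩ ⟨b, m⟩
  simp only [Matrix.sum_apply, Matrix.mul_apply, blockSel, Matrix.transpose_apply, Matrix.of_apply,
    Matrix.one_apply]
  rw [← Fintype.sum_prod_type' (f := fun (x : J) (y : Fin M) =>
    (if (a, i) = (x, y) then (1:ℝ) else 0) * (if (b, m) = (x, y) then 1 else 0))]
  simp [eq_comm]

/-- The covariance of the concatenated input, compressed to the `N` coordinates singled out by
the orthonormal rows of `V`. -/
def compCov {J : Type*} [Fintype J] [DecidableEq J] {N M : ℕ} (V : Matrix (Fin N) (J × Fin M) ℝ)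
    (Q : J → Matrix (Fin M) (Fin M) ℝ) : Matrix (Fin N) (Fin N) ℝ :=
  ∑ j, V * ((blockSel M j)ᵀ * Q j * blockSel M j) * Vᵀ

section compCov
variable {J : Type*} [Fintype J] [DecidableEq J] {N M : ℕ} {V : Matrix (Fin N) (J × Fin M) ℝ}
  {Q : J → Matrix (Fin M) (Fin M) ℝ}

lemma posSemidef_block (hQ : ∀ j, (Q j).PosSemidef) (j : J) :
    ((blockSel M j)ᵀ * Q j * blockSel M j).PosSemidef := by
  simpa [Matrix.conjTranspose_eq_transpose_of_trivial] using
    (hQ j).mul_mul_conjTranspose_same (blockSel M j)ᵀ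

lemma compCov_posSemidef (hQ : ∀ j, (Q j).PosSemidef) : (compCov V Q).PosSemidef := by
  refine Matrix.posSemidef_sum _ fun j _ => ?_
  simpa [Matrix.conjTranspose_eq_transpose_of_trivial] using
    (posSemidef_block hQ j).mul_mul_conjTranspose_same V

lemma compCov_trace_le (hV : V * Vᵀ = 1) (hQ : ∀ j, (Q j).PosSemidef) :
    (compCov V Q).trace ≤ ∑ j, (Q j).trace := by
  rw [compCov, Matrix.trace_sum]
  refine Finset.sum_le_sum fun j _ => (trace_compress_le hV (posSemidef_block hQ j)).trans_eq ?_
  rw [Matrix.trace_mul_comm, ← Matrix.mul_assoc, blockSel_mul_transpose, Matrix.one_mul]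

lemma compCov_smul_one (hV : V * Vᵀ = 1) (c : ℝ) :
    compCov V (fun _ => c • (1 : Matrix (Fin M) (Fin M) ℝ)) = c • 1 := by
  have h : ∀ j : J, V * ((blockSel M j)ᵀ * (c • (1 : Matrix (Fin M) (Fin M) ℝ)) * blockSel M j) * Vᵀ
      = c • (V * ((blockSel M j)ᵀ * blockSel M j) * Vᵀ) := by
    intro j; simp
  simp only [compCov, h]
  rw [← Finset.smul_sum, ← Matrix.sum_mul, ← Matrix.mul_sum, sum_blockSel, Matrix.mul_one, hV]

end compCov

/-! ### The received covariance at high power -/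

/-- Factoring the invertible `T` out of the received covariance leaves `(Tᵀ T)⁻¹` plus the
compressed input covariance. -/
lemma det_received {K N M : ℕ} (H : Fin K → Matrix (Fin N) (Fin M) ℝ) (k : Fin K)
    (T : Matrix (Fin N) (Fin N) ℝ) (Ut : Matrix (Fin N) ({k' : Fin K // k' ≠ k} × Fin M) ℝ)
    (hConcat :
      (Matrix.of fun (i : Fin N) (p : {k' : Fin K // k' ≠ k} × Fin M) => H p.1.1 i p.2)
        = T * Ut) (hT : IsUnit T.det) (c : ℝ) (Q : Fin K → Matrix (Fin M) (Fin M) ℝ) :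
    (1 + c • ∑ k' ∈ Finset.univ.erase k, H k' * Q k' * (H k')ᵀ).det
      = T.det ^ 2 * (T⁻¹ * (T⁻¹)ᵀ +
          c • compCov Ut (fun j : {k' : Fin K // k' ≠ k} => Q j.1)).det := by
  have hHj : ∀ j : {k' : Fin K // k' ≠ k}, H j.1 = T * Ut * (blockSel M j)ᵀ := by
    intro j
    rw [← hConcat, mul_blockSel_transpose]
    rfl
  have hsum : ∑ k' ∈ Finset.univ.erase k, H k' * Q k' * (H k')ᵀ
      = T * compCov Ut (fun j : {k' : Fin K // k' ≠ k} => Q j.1) * Tᵀ := by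
    rw [← Finset.sum_subtype (p := fun k' => k' ≠ k) (Finset.univ.erase k) (by simp)
      (fun k' => H k' * Q k' * (H k')ᵀ) |>.symm, compCov, Matrix.mul_sum, Matrix.sum_mul]
    refine Finset.sum_congr rfl fun j _ => ?_
    rw [hHj j]
    simp only [Matrix.transpose_mul, Matrix.transpose_transpose, Matrix.mul_assoc]
  have h1 : T * (T⁻¹ * (T⁻¹)ᵀ) * Tᵀ = 1 := by
    rw [← Matrix.mul_assoc, Matrix.mul_nonsing_inv _ hT, Matrix.one_mul, ← Matrix.transpose_mul,
      Matrix.mul_nonsing_inv _ hT, Matrix.transpose_one]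
  rw [hsum, show (1 : Matrix (Fin N) (Fin N) ℝ) +
        c • (T * compCov Ut (fun j : {k' : Fin K // k' ≠ k} => Q j.1) * Tᵀ)
      = T * (T⁻¹ * (T⁻¹)ᵀ + c • compCov Ut (fun j : {k' : Fin K // k' ≠ k} => Q j.1)) * Tᵀ by
      rw [Matrix.mul_add, Matrix.add_mul, h1]; simp,
    Matrix.det_mul, Matrix.det_mul, Matrix.det_transpose]
  ring

lemma posDef_inv_gram {N : ℕ} {T : Matrix (Fin N) (Fin N) ℝ} (hT : IsUnit T.det) :
    (T⁻¹ * (T⁻¹)ᵀ).PosDef := by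
  have hu : IsUnit T⁻¹ := (Matrix.isUnit_nonsing_inv_iff).2 ((Matrix.isUnit_iff_isUnit_det T).2 hT)
  have := Matrix.PosDef.mul_conjTranspose_self T⁻¹ (Matrix.vecMul_injective_iff_isUnit.2 hu)
  simpa [Matrix.conjTranspose_eq_transpose_of_trivial] using this

/-- A crude form of `det (G + u • 1) ∼ u ^ N`, valid for every `G`. -/
lemma eventually_half_pow_le_det {N : ℕ} (G : Matrix (Fin N) (Fin N) ℝ) :
    ∀ᶠ u : ℝ in atTop, u ^ N / 2 ≤ (G + u • (1 : Matrix (Fin N) (Fin N) ℝ)).det := by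
  have hc : Continuous fun e : ℝ => (e • G + 1).det := by fun_prop
  have h1 : Tendsto (fun u : ℝ => (u⁻¹ • G + 1).det) atTop (nhds 1) := by
    have := (hc.tendsto 0).comp tendsto_inv_atTop_zero
    simpa [Function.comp_def] using this
  filter_upwards [h1.eventually (lt_mem_nhds (show (1/2 : ℝ) < 1 by norm_num)),
    eventually_gt_atTop 0] with u hu hu0
  have : G + u • (1 : Matrix (Fin N) (Fin N) ℝ) = u • (u⁻¹ • G + 1) := by
    rw [smul_add, smul_smul, mul_inv_cancel₀ hu0.ne', one_smul]
  rw [this, Matrix.det_smul, Fintype.card_fin]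
  have := pow_pos hu0 N
  nlinarith

/-! ### The gap -/

/-- For `α ∈ (0, 1/2)`, the asymptotic gap (as `P → ∞`) between the
cooperative-uplink cut-set bound `B_k(P)` and the equal-power lattice-coding achievable
uplink sum-rate `A_k(P)` for user `k` is bounded by
`α·N·(K−2)/(2(K−1)) + (α/(2(K−1)))·Σ_{k'≠k} Σ_n log₂(t_k(n,n)²/r_{k'}(n,n)²)`. -/
theorem limsup_cutset_sub_achievable_le
    {K N M : ℕ} (hK : 3 ≤ K) (hN : 1 ≤ N) (hM : N ≤ M)
    (β σ2 α : ℝ) (hβ : 0 < β) (hσ : 0 < σ2) (hα : α ∈ Set.Ioo (0:ℝ) (1/2))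
    (H : Fin K → Matrix (Fin N) (Fin M) ℝ)
    (R : Fin K → Matrix (Fin N) (Fin N) ℝ) (U : Fin K → Matrix (Fin N) (Fin M) ℝ)
    (hH : ∀ k', H k' = R k' * U k')
    (hRtri : ∀ k', (R k').BlockTriangular id)
    (hRdiag : ∀ k' n, R k' n n ≠ 0)
    (hU : ∀ k', U k' * (U k')ᵀ = 1)
    (k : Fin K)
    (T : Matrix (Fin N) (Fin N) ℝ)
    (Ut : Matrix (Fin N) ({k' : Fin K // k' ≠ k} × Fin M) ℝ)
    (hConcat :
      (Matrix.of fun (i : Fin N) (p : {k' : Fin K // k' ≠ k} × Fin M) => H p.1.1 i p.2)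
        = T * Ut)
    (hTtri : T.BlockTriangular id) (hTdiag : ∀ n, T n n ≠ 0)
    (hUt : Ut * Utᵀ = 1) :
    Filter.limsup
      (fun P : ℝ =>
        sSup {x : ℝ | ∃ Q : Fin K → Matrix (Fin M) (Fin M) ℝ,
            (∀ k', (Q k').PosSemidef ∧ (Q k').trace ≤ β * P) ∧
            x = (α / 2) * Real.logb 2
              (1 + σ2⁻¹ • ∑ k' ∈ Finset.univ.erase k, H k' * Q k' * (H k')ᵀ).det}
          - (((N : ℝ) * α / 2) * Real.logb 2 (((K : ℝ) - 1) * β * P / ((N : ℝ) * σ2))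
              + (α / (2 * ((K : ℝ) - 1))) *
                  ∑ k' ∈ Finset.univ.erase k, ∑ n, Real.logb 2 ((R k' n n) ^ 2)
              - α * (N : ℝ) * ((K : ℝ) - 2) / (2 * ((K : ℝ) - 1))))
      atTop
    ≤ α * (N : ℝ) * ((K : ℝ) - 2) / (2 * ((K : ℝ) - 1))
        + (α / (2 * ((K : ℝ) - 1))) *
            ∑ k' ∈ Finset.univ.erase k, ∑ n,
              Real.logb 2 ((T n n) ^ 2 / (R k' n n) ^ 2) := by
  have hα0 : 0 < α := hα.1
  have hK1 : (0 : ℝ) < (K : ℝ) - 1 := by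
    have : (3 : ℝ) ≤ K := by exact_mod_cast hK
    linarith
  have hN0 : (0 : ℝ) < N := by exact_mod_cast hN
  have hM0 : (0 : ℝ) < M := by exact_mod_cast (lt_of_lt_of_le hN hM)
  have hl2 : 0 < Real.log 2 := Real.log_pos (by norm_num)
  have hdetT : T.det = ∏ n, T n n := Matrix.det_of_isUpperTriangular hTtri
  have hdet0 : T.det ≠ 0 := by
    rw [hdetT]; exact Finset.prod_ne_zero_iff.2 fun n _ => hTdiag n
  have hTu : IsUnit T.det := hdet0.isUnit
  have hd2 : 0 < T.det ^ 2 := by positivity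
  have hcard : ((Fintype.card {k' : Fin K // k' ≠ k} : ℕ) : ℝ) = (K : ℝ) - 1 := by
    have : Fintype.card {k' : Fin K // k' ≠ k} = K - 1 := by simp
    rw [this, Nat.cast_sub (by omega), Nat.cast_one]
  set G := T⁻¹ * (T⁻¹)ᵀ with hG
  have hGpd : G.PosDef := posDef_inv_gram hTu
  set L : ℝ := ∑ k' ∈ Finset.univ.erase k, ∑ n, Real.logb 2 ((R k' n n) ^ 2) with hL
  set C : ℝ := α * (N : ℝ) * ((K : ℝ) - 2) / (2 * ((K : ℝ) - 1)) with hC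
  set s : ℝ → ℝ := fun P => ((K : ℝ) - 1) * β * P / ((N : ℝ) * σ2) with hs
  have hs_top : Tendsto s atTop atTop := by
    have h0 : 0 < ((K : ℝ) - 1) * β / ((N : ℝ) * σ2) := by positivity
    refine (tendsto_id.const_mul_atTop h0).congr fun P => ?_
    simp only [hs, id]; ring
  have hRHS : C + (α / (2 * ((K : ℝ) - 1))) * ∑ k' ∈ Finset.univ.erase k, ∑ n,
        Real.logb 2 ((T n n) ^ 2 / (R k' n n) ^ 2)
      = α / 2 * Real.logb 2 (T.det ^ 2) - (α / (2 * ((K : ℝ) - 1))) * L + C := by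
    have h1 : ∀ k', ∑ n, Real.logb 2 ((T n n) ^ 2 / (R k' n n) ^ 2)
        = Real.logb 2 (T.det ^ 2) - ∑ n, Real.logb 2 ((R k' n n) ^ 2) := by
      intro k'
      rw [hdetT, ← Finset.prod_pow, Real.logb_prod _ _ (fun n _ => pow_ne_zero 2 (hTdiag n)),
        ← Finset.sum_sub_distrib]
      exact Finset.sum_congr rfl fun n _ =>
        Real.logb_div (pow_ne_zero 2 (hTdiag n)) (pow_ne_zero 2 (hRdiag k' n))
    simp only [h1, Finset.sum_sub_distrib, Finset.sum_const, Finset.card_erase_of_mem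
      (Finset.mem_univ k), Finset.card_univ, Fintype.card_fin, nsmul_eq_mul]
    rw [Nat.cast_sub (by omega : 1 ≤ K), Nat.cast_one, ← hL]
    field_simp
    ring
  rw [hRHS]
  -- `B P` is the set of rates whose supremum is the cut-set bound.
  set B : ℝ → Set ℝ := fun P => {x : ℝ | ∃ Q : Fin K → Matrix (Fin M) (Fin M) ℝ,
            (∀ k', (Q k').PosSemidef ∧ (Q k').trace ≤ β * P) ∧
            x = (α / 2) * Real.logb 2
              (1 + σ2⁻¹ • ∑ k' ∈ Finset.univ.erase k, H k' * Q k' * (H k')ᵀ).det} with hB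
  -- The bound on each rate, with the tangent point chosen at the equal-power level `s P`.
  have hub : ∀ P, 0 < s P → ∀ x ∈ B P, x ≤ α / 2 * Real.logb 2 (T.det ^ 2)
      + N * α / 2 * Real.logb 2 (s P) + α / 2 * (G.trace / Real.log 2) * (s P)⁻¹ := by
    rintro P hsP x ⟨Q, hQ, rfl⟩
    rw [det_received H k T Ut hConcat hTu]
    set S := compCov Ut (fun j : {k' : Fin K // k' ≠ k} => Q j.1)
    have hS : S.PosSemidef := compCov_posSemidef fun j => (hQ j.1).1
    have hX : (G + σ2⁻¹ • S).PosDef := hGpd.add_posSemidef (hS.smul (by positivity))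
    have htrS : S.trace ≤ ((K : ℝ) - 1) * (β * P) := by
      refine (compCov_trace_le hUt fun j => (hQ j.1).1).trans ?_
      refine (Finset.sum_le_sum fun j _ => (hQ j.1).2).trans_eq ?_
      rw [Finset.sum_const, Finset.card_univ, nsmul_eq_mul, hcard]
    have htr : (G + σ2⁻¹ • S).trace ≤ G.trace + N * s P := by
      rw [Matrix.trace_add, Matrix.trace_smul, smul_eq_mul]
      have : N * s P = σ2⁻¹ * (((K : ℝ) - 1) * (β * P)) := by
        simp only [hs]; field_simp
      rw [this]
      gcongr
    have hlog := log_det_le_trace hX hsP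
    have h2 : (G + σ2⁻¹ • S).trace / s P ≤ G.trace / s P + N := by
      rw [div_add' _ _ _ hsP.ne']
      gcongr
    have h3 : Real.log (G + σ2⁻¹ • S).det ≤ G.trace / s P + N * Real.log (s P) := by linarith
    rw [Real.logb_mul hd2.ne' hX.det_pos.ne']
    have h4 : Real.logb 2 (G + σ2⁻¹ • S).det
        ≤ (G.trace / s P + N * Real.log (s P)) / Real.log 2 := by
      unfold Real.logb; gcongr
    calc _ ≤ α / 2 * (Real.logb 2 (T.det ^ 2)
          + (G.trace / s P + N * Real.log (s P)) / Real.log 2) := by gcongr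
      _ = _ := by unfold Real.logb; field_simp; ring
  -- The isotropic input: it makes the set of rates nonempty and bounds the supremum from below.
  have hmem : ∀ P, 0 ≤ P → α / 2 * Real.logb 2 (T.det ^ 2 *
      (G + (σ2⁻¹ * (β * P / M)) • (1 : Matrix (Fin N) (Fin N) ℝ)).det) ∈ B P := by
    intro P hP
    refine ⟨fun _ => (β * P / M) • 1, fun _ => ⟨?_, ?_⟩, ?_⟩
    · exact Matrix.PosSemidef.one.smul (by positivity)
    · rw [Matrix.trace_smul, Matrix.trace_one, Fintype.card_fin, smul_eq_mul,
        div_mul_cancel₀ _ hM0.ne']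
    · rw [det_received H k T Ut hConcat hTu, compCov_smul_one hUt, smul_smul]
  set g : ℝ → ℝ := fun P => (α / 2 * Real.logb 2 (T.det ^ 2) - (α / (2 * ((K : ℝ) - 1))) * L + C)
    + α / 2 * (G.trace / Real.log 2) * (s P)⁻¹ with hg
  have hgt : Tendsto g atTop
      (nhds (α / 2 * Real.logb 2 (T.det ^ 2) - (α / (2 * ((K : ℝ) - 1))) * L + C)) := by
    have := ((tendsto_inv_atTop_zero.comp hs_top).const_mul
      (α / 2 * (G.trace / Real.log 2))).const_add
      (α / 2 * Real.logb 2 (T.det ^ 2) - (α / (2 * ((K : ℝ) - 1))) * L + C)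
    simpa [Function.comp_def, hg] using this
  have hle : ∀ᶠ P in atTop, sSup (B P) - (((N : ℝ) * α / 2) * Real.logb 2 (s P)
      + (α / (2 * ((K : ℝ) - 1))) * L - C) ≤ g P := by
    filter_upwards [hs_top.eventually_gt_atTop 0, eventually_ge_atTop 0] with P hsP hP
    have := csSup_le ⟨_, hmem P hP⟩ (hub P hsP)
    simp only [hg]
    linarith
  have hu_top : Tendsto (fun P : ℝ => σ2⁻¹ * (β * P / M)) atTop atTop := by
    have h0 : 0 < σ2⁻¹ * β / M := by positivity
    refine (tendsto_id.const_mul_atTop h0).congr fun P => ?_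
    simp only [id]; ring
  -- A lower bound is needed because the `limsup` of a real function tending to `-∞` has a junk
  -- value.
  have hlow : ∀ᶠ P in atTop, α / 2 * (Real.logb 2 (T.det ^ 2)
        + (N * Real.logb 2 (N / (M * ((K : ℝ) - 1))) - 1))
        - (α / (2 * ((K : ℝ) - 1))) * L + C
      ≤ sSup (B P) - (((N : ℝ) * α / 2) * Real.logb 2 (s P)
      + (α / (2 * ((K : ℝ) - 1))) * L - C) := by
    filter_upwards [hs_top.eventually_gt_atTop 0, eventually_gt_atTop 0,
      hu_top.eventually (eventually_half_pow_le_det G)] with P hsP hP hdet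
    have h1 := le_csSup ⟨_, hub P hsP⟩ (hmem P hP.le)
    set u := σ2⁻¹ * (β * P / M) with hu
    have hu0 : 0 < u := by positivity
    have hus : u = N / (M * ((K : ℝ) - 1)) * s P := by
      simp only [hu, hs]; field_simp
    have hp : 0 < u ^ N / 2 := by positivity
    have h2 : Real.logb 2 (u ^ N / 2) ≤ Real.logb 2 (G + u • (1 : Matrix _ _ ℝ)).det :=
      Real.logb_le_logb_of_le (by norm_num) hp hdet
    rw [Real.logb_mul hd2.ne' (hp.trans_le hdet).ne'] at h1
    rw [Real.logb_div (by positivity) (by norm_num), Real.logb_pow, hus,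
      Real.logb_mul (by positivity) hsP.ne', Real.logb_self_eq_one (by norm_num), ← hus] at h2
    have h3 := mul_le_mul_of_nonneg_left h2 (show 0 ≤ α / 2 by positivity)
    linarith
  refine (limsup_le_limsup hle ?_ hgt.isBoundedUnder_le).trans_eq hgt.limsup_eq
  exact IsBoundedUnder.isCoboundedUnder_le ⟨_, hlow⟩
end

section
/- Let H ∈ ℝ^{N×m} with N ≤ m and H Hᵀ invertible, and let σ² > 0. Define F(P) = sup{ (1/2)·log₂ det( I_N + (1/σ²)·H Q Hᵀ ) : Q ∈ ℝ^{m×m} symmetric PSD with trace(Q) ≤ P }. Then F(P) − (N/2)·log₂( P/(N·σ²) ) − (1/2)·log₂ det( H Hᵀ ) tends to 0 as P → ∞. -/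
open Matrix Filter

/-! The asymptotics follow from explicit bounds on the supremum that differ by `o(1)`.

Write `K = H Hᵀ` (positive definite), `s = 1 / σ²` and `T = trace K⁻¹`.

* Upper bound. Factor `K⁻¹ = Cᵀ C`. For admissible `Q` and `A = 1 + s H Q Hᵀ`, the AM-GM inequality
  for the eigenvalues of `C A Cᵀ` gives `det A ≤ det K * (trace (K⁻¹ A) / N) ^ N`. Since
  `G = Hᵀ K⁻¹ H` is an orthogonal projection, `trace (K⁻¹ A) = T + s * trace (G Q) ≤ T + s P`.
* Lower bound. The choice `Q = (P / N) G` has trace `P` and satisfies `H Q Hᵀ = (P / N) K`, so that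
  `det A = det (1 + (s P / N) K) = (s P / N) ^ N * det ((s P / N)⁻¹ • 1 + K)`.

After subtracting `(N / 2) log₂ (P / (N σ²)) + (1 / 2) log₂ det K`, the upper bound becomes
`(N / 2) log₂ ((T + s P) / (s P))` and the lower bound becomes
`(1 / 2) log₂ det ((s P / N)⁻¹ • 1 + K) - (1 / 2) log₂ det K`; both tend to `0` as `P → ∞`. -/

/-- The AM-GM inequality for the eigenvalues of a positive semidefinite matrix. -/
lemma det_le_trace_div_pow_s3 {N : ℕ} (hN : 0 < N) {M : Matrix (Fin N) (Fin N) ℝ}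
    (hM : M.PosSemidef) : M.det ≤ (M.trace / N) ^ N := by
  have hdet : M.det = ∏ i, hM.1.eigenvalues i := by simpa using hM.1.det_eq_prod_eigenvalues
  have htr : M.trace = ∑ i, hM.1.eigenvalues i := by simpa using hM.1.trace_eq_sum_eigenvalues
  have h0 : 0 ≤ ∏ i, hM.1.eigenvalues i :=
    Finset.prod_nonneg fun i _ => hM.eigenvalues_nonneg i
  have h := Real.geom_mean_le_arith_mean Finset.univ (fun _ : Fin N => (1 : ℝ)) hM.1.eigenvalues
    (by simp) (by simpa using hN) (fun i _ => hM.eigenvalues_nonneg i)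
  simp only [Real.rpow_one, Finset.sum_const, Finset.card_univ, Fintype.card_fin, nsmul_eq_mul,
    mul_one, one_mul] at h
  rw [hdet, htr, ← Real.rpow_inv_natCast_pow h0 hN.ne']
  exact pow_le_pow_left₀ (Real.rpow_nonneg h0 _) h N

/-- AM-GM after whitening by `K`: with `K⁻¹ = Cᵀ C`, it is applied to `C A Cᵀ`. -/
lemma det_le_det_mul_trace_inv_mul {N : ℕ} (hN : 0 < N) {K A : Matrix (Fin N) (Fin N) ℝ}
    (hK : K.PosDef) (hA : A.PosSemidef) : A.det ≤ K.det * ((K⁻¹ * A).trace / N) ^ N := by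
  obtain ⟨C, hC⟩ : ∃ C : Matrix (Fin N) (Fin N) ℝ, K⁻¹ = Cᵀ * C := by
    open scoped MatrixOrder in
    obtain ⟨C, hC⟩ := CStarAlgebra.nonneg_iff_eq_star_mul_self.mp hK.inv.posSemidef.nonneg
    exact ⟨C, by simpa [star_eq_conjTranspose] using hC⟩
  have h := det_le_trace_div_pow_s3 hN (hA.mul_mul_conjTranspose_same C)
  have htr : (C * A * Cᴴ).trace = (K⁻¹ * A).trace := by
    rw [conjTranspose_eq_transpose_of_trivial, trace_mul_comm, hC, Matrix.mul_assoc]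
  have hdet : K.det * (C * A * Cᴴ).det = A.det := by
    have h1 : K.det * K⁻¹.det = 1 := by
      rw [← det_mul, mul_nonsing_inv _ hK.det_pos.ne'.isUnit, det_one]
    rw [hC, det_mul, det_transpose] at h1
    rw [conjTranspose_eq_transpose_of_trivial, det_mul, det_mul, det_transpose]
    linear_combination A.det * h1
  rw [htr] at h
  rw [← hdet]
  exact mul_le_mul_of_nonneg_left h hK.det_pos.le

/-- Compressing a positive semidefinite matrix by an orthogonal projection does not increase its
trace, because `trace Q - trace (G Q) = trace ((1 - G) Q (1 - G)ᵀ)`. -/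
lemma trace_projection_mul_le {m : ℕ} {G Q : Matrix (Fin m) (Fin m) ℝ}
    (hGt : Gᵀ = G) (hGG : G * G = G) (hQ : Q.PosSemidef) : (G * Q).trace ≤ Q.trace := by
  have h := (hQ.mul_mul_conjTranspose_same (1 - G)).trace_nonneg
  have hidem : (1 - G) * (1 - G) = 1 - G := by
    simp [sub_mul, mul_sub, hGG]
  rw [conjTranspose_eq_transpose_of_trivial, transpose_sub, transpose_one, hGt, trace_mul_comm,
    ← Matrix.mul_assoc, hidem, sub_mul, one_mul, trace_sub] at h
  linarith

/-- For `H ∈ ℝ^{N×m}` with `N ≤ m` and `H Hᵀ` invertible, and `σ² > 0`, with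
`F(P) = sup{ (1/2)·log₂ det(I_N + (1/σ²)·H Q Hᵀ) : Q symmetric PSD, trace Q ≤ P }`, one has
`F(P) − (N/2)·log₂(P/(N·σ²)) − (1/2)·log₂ det(H Hᵀ) → 0` as `P → ∞`. -/
theorem waterfilling_sup_sub_asymptote_tendsto_zero
    {N m : ℕ} (hN : 0 < N) (hm : 0 < m) (hNm : N ≤ m)
    (H : Matrix (Fin N) (Fin m) ℝ) (hH : (H * Hᵀ).det ≠ 0)
    (σ2 : ℝ) (hσ : 0 < σ2) :
    Tendsto (fun P : ℝ =>
        sSup {x : ℝ | ∃ Q : Matrix (Fin m) (Fin m) ℝ, Q.PosSemidef ∧ Q.trace ≤ P ∧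
            x = (1 / 2) * Real.logb 2 (1 + σ2⁻¹ • (H * Q * Hᵀ)).det}
          - ((N : ℝ) / 2) * Real.logb 2 (P / (N * σ2))
          - (1 / 2) * Real.logb 2 (H * Hᵀ).det)
      atTop (nhds 0) := by
  have hNR : (0 : ℝ) < N := by exact_mod_cast hN
  have hs : 0 < σ2⁻¹ := inv_pos.mpr hσ
  have hKt : (H * Hᵀ)ᵀ = H * Hᵀ := by simp
  have hK : (H * Hᵀ).PosDef := by
    have h := posSemidef_self_mul_conjTranspose H
    rw [conjTranspose_eq_transpose_of_trivial] at h
    exact h.posDef_iff_det_ne_zero.mpr hH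
  obtain ⟨G, hG⟩ : ∃ G, G = Hᵀ * (H * Hᵀ)⁻¹ * H := ⟨_, rfl⟩
  have hKdet : IsUnit (H * Hᵀ).det := hH.isUnit
  have hHG : H * G * Hᵀ = H * Hᵀ := by
    calc H * G * Hᵀ = (H * Hᵀ) * (H * Hᵀ)⁻¹ * (H * Hᵀ) := by
          rw [hG]; simp only [Matrix.mul_assoc]
      _ = H * Hᵀ := by rw [mul_nonsing_inv _ hKdet, one_mul]
  have hGt : Gᵀ = G := by
    rw [hG, transpose_mul, transpose_mul, transpose_transpose, transpose_nonsing_inv, hKt,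
      Matrix.mul_assoc]
  have hGG : G * G = G := by
    calc G * G = Hᵀ * ((H * Hᵀ)⁻¹ * (H * Hᵀ)) * (H * Hᵀ)⁻¹ * H := by
          rw [hG]; simp only [Matrix.mul_assoc]
      _ = G := by rw [nonsing_inv_mul _ hKdet, Matrix.mul_one, hG]
  have hGtr : G.trace = N := by
    rw [hG, Matrix.mul_assoc, trace_mul_comm, Matrix.mul_assoc, nonsing_inv_mul _ hKdet]
    simp
  have hGpsd : G.PosSemidef := by
    have h := posSemidef_self_mul_conjTranspose G
    rwa [conjTranspose_eq_transpose_of_trivial, hGt, hGG] at h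
  obtain ⟨K, hKdef⟩ : ∃ K, K = H * Hᵀ := ⟨_, rfl⟩
  simp only [← hKdef] at *
  have hT : 0 ≤ K⁻¹.trace := hK.inv.posSemidef.trace_nonneg
  have hA (Q : Matrix (Fin m) (Fin m) ℝ) (hQ : Q.PosSemidef) :
      (1 + σ2⁻¹ • (H * Q * Hᵀ)).PosDef := by
    have h := (hQ.mul_mul_conjTranspose_same H).smul hs.le
    rw [conjTranspose_eq_transpose_of_trivial] at h
    exact PosDef.one.add_posSemidef h
  have hdetle (P : ℝ) (Q : Matrix (Fin m) (Fin m) ℝ) (hQ : Q.PosSemidef) (hP : Q.trace ≤ P) :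
      (1 + σ2⁻¹ • (H * Q * Hᵀ)).det ≤ K.det * ((K⁻¹.trace + σ2⁻¹ * P) / N) ^ N := by
    refine (det_le_det_mul_trace_inv_mul hN hK (hA Q hQ).posSemidef).trans ?_
    have htr : (K⁻¹ * (1 + σ2⁻¹ • (H * Q * Hᵀ))).trace
        = K⁻¹.trace + σ2⁻¹ * (G * Q).trace := by
      have : (K⁻¹ * (H * Q * Hᵀ)).trace = (G * Q).trace := by
        rw [hG, ← Matrix.mul_assoc, trace_mul_comm]
        simp only [Matrix.mul_assoc]
      rw [mul_add, trace_add, mul_one, mul_smul_comm, trace_smul, smul_eq_mul, this]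
    have h0 : 0 ≤ (G * Q).trace := by
      have h := (hQ.mul_mul_conjTranspose_same G).trace_nonneg
      rwa [conjTranspose_eq_transpose_of_trivial, hGt, trace_mul_comm, ← Matrix.mul_assoc,
        hGG] at h
    have h1 := trace_projection_mul_le hGt hGG hQ
    rw [htr]
    have := hK.det_pos
    gcongr
    exact h1.trans hP
  -- The upper bound, normalised by the asymptote, tends to `0`.
  have hupper : Tendsto (fun P : ℝ => (N : ℝ) / 2 * Real.logb 2 (1 + K⁻¹.trace * σ2 / P))
      atTop (nhds 0) := by
    have h1 : Tendsto (fun P : ℝ => 1 + K⁻¹.trace * σ2 / P) atTop (nhds (1 + 0)) :=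
      (tendsto_const_nhds.div_atTop tendsto_id).const_add 1
    have h2 := ((Real.continuousAt_log (by norm_num : (1 + 0 : ℝ) ≠ 0)).tendsto.comp h1).div_const
      (Real.log 2) |>.const_mul ((N : ℝ) / 2)
    simpa [Real.logb, Function.comp_def] using h2
  -- The lower bound, normalised by the asymptote, tends to `0` by continuity of the determinant.
  have hlower : Tendsto (fun P : ℝ =>
      1 / 2 * Real.logb 2 ((N * σ2 / P) • (1 : Matrix (Fin N) (Fin N) ℝ) + K).det
        - 1 / 2 * Real.logb 2 K.det) atTop (nhds 0) := by
    have h1 : Tendsto (fun P : ℝ => N * σ2 / P) atTop (nhds 0) :=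
      tendsto_const_nhds.div_atTop tendsto_id
    have h2 : Continuous fun t : ℝ => (t • (1 : Matrix (Fin N) (Fin N) ℝ) + K).det := by
      fun_prop
    have h3 : Tendsto (fun P : ℝ => ((N * σ2 / P) • (1 : Matrix (Fin N) (Fin N) ℝ) + K).det)
        atTop (nhds K.det) := by
      simpa [Function.comp_def] using (h2.tendsto 0).comp h1
    have h4 := (((Real.continuousAt_log hH).tendsto.comp h3).div_const
      (Real.log 2) |>.const_mul (1 / 2 : ℝ)).sub_const (1 / 2 * Real.logb 2 K.det)
    simpa [Real.logb, Function.comp_def] using h4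
  refine tendsto_of_tendsto_of_tendsto_of_le_of_le' hlower hupper ?_ ?_
  · filter_upwards [eventually_gt_atTop 0] with P hP
    have hc : 0 < P / (N * σ2) := by positivity
    have hmem : (1 / 2) * Real.logb 2 (1 + σ2⁻¹ • (H * ((P / N) • G) * Hᵀ)).det ≤
        sSup {x : ℝ | ∃ Q : Matrix (Fin m) (Fin m) ℝ, Q.PosSemidef ∧ Q.trace ≤ P ∧
            x = (1 / 2) * Real.logb 2 (1 + σ2⁻¹ • (H * Q * Hᵀ)).det} := by
      refine le_csSup ⟨1 / 2 * Real.logb 2 (K.det * ((K⁻¹.trace + σ2⁻¹ * P) / N) ^ N), ?_⟩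
        ⟨(P / N) • G, hGpsd.smul (by positivity), ?_, rfl⟩
      · rintro x ⟨Q, hQ, hQP, rfl⟩
        gcongr
        · norm_num
        · exact (hA Q hQ).det_pos
        · exact hdetle P Q hQ hQP
      · rw [trace_smul, hGtr, smul_eq_mul, div_mul_cancel₀ _ hNR.ne']
    have hmat : 1 + σ2⁻¹ • (H * ((P / N) • G) * Hᵀ)
        = (P / (N * σ2)) • ((N * σ2 / P) • (1 : Matrix (Fin N) (Fin N) ℝ) + K) := by
      rw [Matrix.mul_smul, Matrix.smul_mul, hHG, smul_add, smul_smul, smul_smul]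
      congr 2
      · rw [show P / (N * σ2) * (N * σ2 / P) = 1 by field_simp, one_smul]
      · field_simp
    have hpos : 0 < ((N * σ2 / P) • (1 : Matrix (Fin N) (Fin N) ℝ) + K).det :=
      ((PosDef.one.smul (by positivity)).add hK).det_pos
    rw [hmat, det_smul, Fintype.card_fin, Real.logb_mul (by positivity) hpos.ne',
      Real.logb_pow] at hmem
    linarith
  · filter_upwards [eventually_gt_atTop 0] with P hP
    have hc : 0 < P / (N * σ2) := by positivity
    have hsup : sSup {x : ℝ | ∃ Q : Matrix (Fin m) (Fin m) ℝ, Q.PosSemidef ∧ Q.trace ≤ P ∧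
            x = (1 / 2) * Real.logb 2 (1 + σ2⁻¹ • (H * Q * Hᵀ)).det} ≤
        1 / 2 * Real.logb 2 (K.det * ((K⁻¹.trace + σ2⁻¹ * P) / N) ^ N) := by
      refine csSup_le ⟨_, 0, PosSemidef.zero, by simpa using hP.le, rfl⟩ ?_
      rintro x ⟨Q, hQ, hQP, rfl⟩
      gcongr
      · norm_num
      · exact (hA Q hQ).det_pos
      · exact hdetle P Q hQ hQP
    have hfac : (K⁻¹.trace + σ2⁻¹ * P) / N = P / (N * σ2) * (1 + K⁻¹.trace * σ2 / P) := by
      field_simp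
      ring
    have h1 : 0 < 1 + K⁻¹.trace * σ2 / P := by positivity
    rw [hfac, Real.logb_mul hH (by positivity), Real.logb_pow,
      Real.logb_mul hc.ne' h1.ne'] at hsup
    linarith
end

section
/- Let A_1,…,A_N be M×M real symmetric positive semidefinite matrices. Then the supremum of Σ_{n=1}^N R_n over all real tuples (R_1,…,R_N) satisfying Σ_{n∈S} R_n ≤ (1/2)·log₂ det( I_M + Σ_{n∈S} A_n ) for every subset S ⊆ {1,…,N} equals (1/2)·log₂ det( I_M + Σ_{n=1}^N A_n ), and the supremum is attained; that is, the maximum sum-rate of the Gaussian-vector multiple-access rate region determined by these log-determinant constraints equals the full-set constraint value. -/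
open Matrix

/-!
Write `f S = (1/2) log₂ det (1 + ∑ n ∈ S, A n)`. The constraint at the full set is itself an upper
bound for the sum-rate, so the content is attainment. The witness is the corner point of the
polymatroid, `R n = f {0, …, n} - f {0, …, n - 1}`, whose total telescopes to `f univ - f ∅` with
`f ∅ = 0`. It lies in the region because `f` is submodular: the marginal gain of adding `n` to
`{0, …, n - 1}` is at most that of adding it to a smaller set, and one builds up any `S` in
increasing order (`greedy_sum_le`).

Submodularity is the determinant inequality `det (X + B + C) * det X ≤ det (X + B) * det (X + C)`
for `X` positive definite and `B`, `C` positive semidefinite (`det_submodular`). With `C = Dᴴ D`,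
the matrix determinant lemma gives `det (Y + C) = det Y * det (1 + D Y⁻¹ Dᴴ)`, so the inequality
says that `det (1 + D Y⁻¹ Dᴴ)` decreases from `Y = X` to `Y = X + B`. This holds because inversion
is antitone and the determinant is monotone in the Loewner order.
-/

namespace MacSumRate

variable {M : ℕ}

lemma one_le_det_one_add {P : Matrix (Fin M) (Fin M) ℝ} (hP : P.PosSemidef) :
    1 ≤ (1 + P).det := by
  -- The eigenvalues of `1 + P` are `1 + λ i`, read off from the characteristic polynomial of `P`
  -- at `-1`.
  have h : (1 + P).det = ∏ i, (1 + hP.1.eigenvalues i) := by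
    have h1 := congrArg (Polynomial.eval (-1)) hP.1.charpoly_eq
    rw [Matrix.eval_charpoly, Polynomial.eval_prod] at h1
    have h2 : Matrix.scalar (Fin M) (-1 : ℝ) - P = -(1 + P) := by
      rw [map_neg, map_one]; abel
    have h3 : ∀ i, Polynomial.eval (-1 : ℝ)
        (Polynomial.X - Polynomial.C ((hP.1.eigenvalues i : ℝ))) =
          -1 * (1 + hP.1.eigenvalues i) := by
      intro i; simp; ring
    rw [h2, Matrix.det_neg] at h1
    simp only [RCLike.ofReal_real_eq_id, id_eq, h3, Finset.prod_mul_distrib] at h1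
    simpa using h1
  rw [h]
  calc (1 : ℝ) = ∏ _i : Fin M, (1 : ℝ) := by simp
    _ ≤ _ := Finset.prod_le_prod (by simp) fun i _ => by
      have := hP.eigenvalues_nonneg i
      linarith

lemma exists_factor {C : Matrix (Fin M) (Fin M) ℝ} (hC : C.PosSemidef) :
    ∃ D : Matrix (Fin M) (Fin M) ℝ, C = Dᴴ * D := by
  open scoped MatrixOrder in
  exact (CStarAlgebra.nonneg_iff_eq_star_mul_self).1 hC.nonneg

/-- The matrix determinant lemma for a Gram perturbation. -/
lemma det_add_gram {X : Matrix (Fin M) (Fin M) ℝ} (hX : X.PosDef)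
    (D : Matrix (Fin M) (Fin M) ℝ) :
    (X + Dᴴ * D).det = X.det * (1 + D * X⁻¹ * Dᴴ).det :=
  Matrix.det_add_mul (U := Dᴴ) (V := D) ((Matrix.isUnit_iff_isUnit_det _).1 hX.isUnit)

/-- The determinant is monotone in the Loewner order on positive definite matrices. -/
lemma det_le_det_add {X C : Matrix (Fin M) (Fin M) ℝ} (hX : X.PosDef) (hC : C.PosSemidef) :
    X.det ≤ (X + C).det := by
  obtain ⟨D, rfl⟩ := exists_factor hC
  rw [det_add_gram hX]
  exact le_mul_of_one_le_right hX.det_pos.le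
    (one_le_det_one_add (hX.inv.posSemidef.mul_mul_conjTranspose_same D))

/-- Inversion is antitone: both Schur complements of the block matrix `[X + B, 1; 1, X⁻¹]` are used,
one giving its positivity from that of `B`, the other the stated conclusion. -/
lemma posSemidef_inv_sub_inv {X B : Matrix (Fin M) (Fin M) ℝ} (hX : X.PosDef)
    (hB : B.PosSemidef) : (X⁻¹ - (X + B)⁻¹).PosSemidef := by
  have hXB : (X + B).PosDef := hX.add_posSemidef hB
  let _ := hXB.isUnit.invertible
  let _ := hX.inv.isUnit.invertible
  have hinv : X⁻¹⁻¹ = X :=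
    Matrix.nonsing_inv_nonsing_inv _ ((Matrix.isUnit_iff_isUnit_det _).1 hX.isUnit)
  have h2 := Matrix.PosDef.fromBlocks₂₂ (X + B) (1 : Matrix (Fin M) (Fin M) ℝ) hX.inv
  have h1 := Matrix.PosDef.fromBlocks₁₁ (1 : Matrix (Fin M) (Fin M) ℝ) (X⁻¹) hXB
  simp only [conjTranspose_one, mul_one, one_mul, hinv, add_sub_cancel_left] at h1 h2
  exact h1.1 (h2.2 hB)

/-- Multiplicative submodularity of the determinant. -/
lemma det_submodular {X B C : Matrix (Fin M) (Fin M) ℝ} (hX : X.PosDef) (hB : B.PosSemidef)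
    (hC : C.PosSemidef) : (X + B + C).det * X.det ≤ (X + B).det * (X + C).det := by
  have hXB : (X + B).PosDef := hX.add_posSemidef hB
  obtain ⟨D, rfl⟩ := exists_factor hC
  rw [det_add_gram hXB, det_add_gram hX]
  have key : (1 + D * (X + B)⁻¹ * Dᴴ).det ≤ (1 + D * X⁻¹ * Dᴴ).det := by
    have hpd : (1 + D * (X + B)⁻¹ * Dᴴ).PosDef :=
      Matrix.PosDef.one.add_posSemidef (hXB.inv.posSemidef.mul_mul_conjTranspose_same D)
    have h := det_le_det_add hpd
      ((posSemidef_inv_sub_inv hX hB).mul_mul_conjTranspose_same D)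
    have e : 1 + D * (X + B)⁻¹ * Dᴴ + D * (X⁻¹ - (X + B)⁻¹) * Dᴴ = 1 + D * X⁻¹ * Dᴴ := by
      rw [mul_sub, sub_mul]; abel
    rwa [e] at h
  calc _ = ((X + B).det * X.det) * (1 + D * (X + B)⁻¹ * Dᴴ).det := by ring
    _ ≤ ((X + B).det * X.det) * (1 + D * X⁻¹ * Dᴴ).det :=
      mul_le_mul_of_nonneg_left key (mul_pos hXB.det_pos hX.det_pos).le
    _ = _ := by ring

variable {N : ℕ}

/-- The right-hand side of the rate constraint for the set of users `S`. -/
noncomputable def rateBound (A : Fin N → Matrix (Fin M) (Fin M) ℝ) (S : Finset (Fin N)) : ℝ :=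
  (1 / 2) * Real.logb 2 (1 + ∑ n ∈ S, A n).det

/-- Diminishing returns: a user's marginal gain decreases as the set of other users grows. -/
lemma rateBound_marginal {A : Fin N → Matrix (Fin M) (Fin M) ℝ} (hA : ∀ n, (A n).PosSemidef)
    {S T : Finset (Fin N)} (hST : S ⊆ T) {a : Fin N} (ha : a ∉ T) :
    rateBound A (insert a T) - rateBound A T ≤ rateBound A (insert a S) - rateBound A S := by
  have hpd : ∀ U : Finset (Fin N), (1 + ∑ n ∈ U, A n).PosDef := fun U =>
    Matrix.PosDef.one.add_posSemidef (Matrix.posSemidef_sum U fun n _ => hA n)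
  have h := det_submodular (hpd S) (Matrix.posSemidef_sum (T \ S) fun n _ => hA n) (hA a)
  have eT : 1 + ∑ n ∈ S, A n + ∑ n ∈ T \ S, A n = 1 + ∑ n ∈ T, A n := by
    rw [← Finset.sum_sdiff hST]; abel
  have eI : ∀ U : Finset (Fin N), a ∉ U →
      1 + ∑ n ∈ U, A n + A a = 1 + ∑ n ∈ insert a U, A n := by
    intro U hU
    rw [Finset.sum_insert hU]; abel
  rw [eT, eI T ha, eI S fun hS => ha (hST hS)] at h
  have hl := Real.logb_le_logb_of_le (b := 2) (by norm_num)
    (mul_pos (hpd (insert a T)).det_pos (hpd S).det_pos) h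
  rw [Real.logb_mul (hpd _).det_pos.ne' (hpd _).det_pos.ne',
    Real.logb_mul (hpd _).det_pos.ne' (hpd _).det_pos.ne'] at hl
  unfold rateBound
  linarith

/-- The rate bound for the first `k` users. -/
noncomputable def prefixBound (A : Fin N → Matrix (Fin M) (Fin M) ℝ) (k : ℕ) : ℝ :=
  rateBound A {n | n.val < k}

lemma rateBound_empty (A : Fin N → Matrix (Fin M) (Fin M) ℝ) : rateBound A ∅ = 0 := by
  simp [rateBound]

/-- The greedy rates satisfy every constraint. -/
lemma greedy_sum_le {A : Fin N → Matrix (Fin M) (Fin M) ℝ} (hA : ∀ n, (A n).PosSemidef)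
    (S : Finset (Fin N)) :
    ∑ n ∈ S, (prefixBound A (n + 1) - prefixBound A n) ≤ rateBound A S := by
  induction S using Finset.induction_on_max with
  | empty => simp [rateBound_empty]
  | insert a S hS ih =>
    have haS : a ∉ S := fun h => lt_irrefl _ (hS a h)
    rw [Finset.sum_insert haS]
    have h := rateBound_marginal hA (S := S) (T := {n | n.val < a.val}) (a := a)
      (fun n hn => by simpa using hS n hn) (by simp)
    have e : insert a ({n | n.val < a.val} : Finset (Fin N)) =
        ({n | n.val < a.val + 1} : Finset (Fin N)) := by
      ext n
      simp only [Finset.mem_insert, Finset.mem_filter, Finset.mem_univ, true_and, Fin.ext_iff]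
      omega
    rw [e] at h
    unfold prefixBound at *
    linarith

/-- The greedy rates sum to the full-set bound. -/
lemma greedy_sum_univ (A : Fin N → Matrix (Fin M) (Fin M) ℝ) :
    ∑ n : Fin N, (prefixBound A (n + 1) - prefixBound A n) = rateBound A Finset.univ := by
  rw [Fin.sum_univ_eq_sum_range (fun k => prefixBound A (k + 1) - prefixBound A k),
    Finset.sum_range_sub]
  simp [prefixBound, rateBound_empty]

end MacSumRate

/-- The maximum sum-rate of the Gaussian-vector multiple-access rate region
determined by the log-determinant constraints equals the full-set constraint value, and the
supremum is attained. -/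
theorem mac_sum_rate_isGreatest
    {M N : ℕ} (A : Fin N → Matrix (Fin M) (Fin M) ℝ) (hA : ∀ n, (A n).PosSemidef) :
    IsGreatest
      {s : ℝ | ∃ R : Fin N → ℝ,
        (∀ S : Finset (Fin N),
          ∑ n ∈ S, R n ≤ (1 / 2) * Real.logb 2 (1 + ∑ n ∈ S, A n).det) ∧
        s = ∑ n, R n}
      ((1 / 2) * Real.logb 2 (1 + ∑ n, A n).det) := by
  constructor
  · exact ⟨fun n => MacSumRate.prefixBound A (n + 1) - MacSumRate.prefixBound A n,
      MacSumRate.greedy_sum_le hA, (MacSumRate.greedy_sum_univ A).symm⟩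
  · rintro s ⟨R, hR, rfl⟩
    exact hR Finset.univ
end
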